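/- arXiv:2403.05505 — 7 statements merged into one kernel-verified Lean document; each statement's English description precedes it below -/
import Mathlib

section
/- Let (M,d) be a metric space and S = {1,…,N} a finite set. For every x ∈ M let Q(x) = (q_{ij}(x)) be a conservative irreducible rate matrix on S with sup_{x ∈ M, i ∈ S} (−q_{ii}(x)) < ∞, and assume that for every compact set K ⊆ M there is a constant C_K > 0 such that |q_{ij}(x) − q_{ij}(y)| ≤ C_K d(x,y) for all x, y ∈ K and all i, j ∈ S. Define I(x,π) = − inf_{g : S → (0,∞)} Σ_{z ∈ S} π_z (Q(x)g)(z)/g(z). Then for every compact set K ⊆ M the family of functions {x ↦ I(x,π) : π ∈ 𝒫(S)} is uniformly equicontinuous on K: for every ε > 0 there exists δ > 0 such that for all π ∈ 𝒫(S) and all x, y ∈ K with d(x,y) < δ one has |I(x,π) − I(y,π)| ≤ ε. -/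
/-!
Off the diagonal put `r (i, j) = π i * q i j`, the flux of jumps from `i` to `j`. Then
`I(x, π) = sup_{g > 0} ∑_{i ≠ j} (1 - g j / g i) * r (i, j)` is a supremum of linear functionals
of `r ≥ 0` whose coefficients are all at most `1`. Such a supremum `J` is continuous on the closed
orthant, boundary included, even where no optimal `g` exists. Lower semicontinuity is automatic.
For upper semicontinuity, if `0 < t < 1` then `t • r₀ ≤ r` for every `r ≥ 0` close to `r₀`, and
bounding the coefficients on `r - t • r₀` by `1` gives `J r ≤ ∑ (r - t • r₀) + t * J r₀`; let
`r → r₀` and then `t → 1`. Hence `I` is jointly continuous in `(x, π)`, and since the simplex of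
all `π` is compact, Heine–Cantor on `K` gives the claim.
-/

open Filter Topology Set

lemma eventually_smul_le_nhdsWithin_Ici {E : Type*} [Finite E] {r₀ : E → ℝ}
    (hr₀ : 0 ≤ r₀) {t : ℝ} (ht : t < 1) :
    ∀ᶠ r in 𝓝[Ici 0] r₀, t • r₀ ≤ r := by
  refine eventually_all.2 fun e => ?_
  rcases (hr₀ e).eq_or_lt with h | h
  · filter_upwards [self_mem_nhdsWithin] with r hr
    simpa [← h] using hr e
  · have hlt : t * r₀ e < r₀ e := mul_lt_of_lt_one_left h ht
    have he : Tendsto (fun r : E → ℝ => r e) (𝓝[Ici 0] r₀) (𝓝 (r₀ e)) :=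
      (continuous_apply e).continuousWithinAt
    exact (he.eventually_const_lt hlt).mono fun r hr => hr.le

section SupportFunction

variable {α E : Type*} [Fintype E] {c : α → E → ℝ} {b : E → ℝ}

lemma bddAbove_range_dotProduct (hc : ∀ a, c a ≤ b) {r : E → ℝ} (hr : 0 ≤ r) :
    BddAbove (range fun a => c a ⬝ᵥ r) :=
  ⟨b ⬝ᵥ r, forall_mem_range.2 fun a => dotProduct_le_dotProduct_of_nonneg_right (hc a) hr⟩

lemma iSup_dotProduct_le_of_smul_le [Nonempty α] (hc : ∀ a, c a ≤ b) {r r₀ : E → ℝ}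
    (hr₀ : 0 ≤ r₀) {t : ℝ} (ht : 0 ≤ t) (h : t • r₀ ≤ r) :
    ⨆ a, c a ⬝ᵥ r ≤ b ⬝ᵥ (r - t • r₀) + t * ⨆ a, c a ⬝ᵥ r₀ := by
  refine ciSup_le fun a => ?_
  calc c a ⬝ᵥ r = c a ⬝ᵥ (r - t • r₀) + t * c a ⬝ᵥ r₀ := by
        rw [dotProduct_sub, dotProduct_smul, smul_eq_mul, sub_add_cancel]
    _ ≤ b ⬝ᵥ (r - t • r₀) + t * ⨆ a, c a ⬝ᵥ r₀ := by
        gcongr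
        · exact dotProduct_le_dotProduct_of_nonneg_right (hc a) (sub_nonneg.2 h)
        · exact le_ciSup (bddAbove_range_dotProduct hc hr₀) a

lemma upperSemicontinuousOn_iSup_dotProduct [Nonempty α] (hc : ∀ a, c a ≤ b) :
    UpperSemicontinuousOn (fun r => ⨆ a, c a ⬝ᵥ r) (Ici 0) := by
  intro r₀ hr₀ y hy
  let bound (t : ℝ) (r : E → ℝ) : ℝ := b ⬝ᵥ (r - t • r₀) + t * ⨆ a, c a ⬝ᵥ r₀
  obtain ⟨t, hty, ht₀, ht₁⟩ : ∃ t, bound t r₀ < y ∧ 0 < t ∧ t < 1 := by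
    have hcont : Continuous fun t => bound t r₀ := by fun_prop
    have hlim : Tendsto (fun t => bound t r₀) (𝓝[<] 1) (𝓝 (bound 1 r₀)) :=
      hcont.continuousWithinAt
    have hone : bound 1 r₀ < y := by simpa [bound] using hy
    exact ((hlim.eventually_lt_const hone).and (Ioo_mem_nhdsLT one_pos)).exists
  have hcont : Continuous (bound t) := by fun_prop
  filter_upwards [eventually_smul_le_nhdsWithin_Ici hr₀ ht₁,
    hcont.continuousWithinAt.eventually_lt_const hty] with r hle hlt
  exact (iSup_dotProduct_le_of_smul_le hc hr₀ ht₀.le hle).trans_lt hlt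

lemma continuousOn_iSup_dotProduct [Nonempty α] (hc : ∀ a, c a ≤ b) :
    ContinuousOn (fun r => ⨆ a, c a ⬝ᵥ r) (Ici 0) := by
  refine continuousOn_iff_lower_upperSemicontinuousOn.2
    ⟨lowerSemicontinuousOn_ciSup (fun r hr => bddAbove_range_dotProduct hc hr) fun a => ?_,
      upperSemicontinuousOn_iSup_dotProduct hc⟩
  have hcont : Continuous fun r => c a ⬝ᵥ r := by fun_prop
  exact hcont.lowerSemicontinuous.lowerSemicontinuousOn _

end SupportFunction

lemma uniformEquicontinuousOn_iff_dist_lt {κ X Z : Type*} [PseudoMetricSpace X]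
    [PseudoMetricSpace Z] {F : κ → X → Z} {S : Set X} :
    UniformEquicontinuousOn F S ↔ ∀ ε > 0, ∃ δ > 0, ∀ x ∈ S, ∀ y ∈ S, dist x y < δ →
      ∀ k, dist (F k x) (F k y) < ε := by
  rw [(Metric.uniformity_basis_dist.inf_principal _).uniformEquicontinuousOn_iff
    Metric.uniformity_basis_dist]
  simp only [mem_inter_iff, mem_ofPred_eq, mem_prod]
  grind

lemma uniformEquicontinuousOn_of_continuousOn_prod {X Y Z : Type*} [UniformSpace X]
    [TopologicalSpace Y] [UniformSpace Z] {f : X → Y → Z} {K : Set X} {T : Set Y}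
    (hK : IsCompact K) (hT : IsCompact T) (hf : ContinuousOn (Function.uncurry f) (K ×ˢ T)) :
    UniformEquicontinuousOn (fun (y : T) x => f x y) K := by
  have : CompactSpace K := isCompact_iff_compactSpace.1 hK
  rw [← uniformEquicontinuous_restrict_iff]
  refine CompactSpace.uniformEquicontinuous_of_equicontinuous ?_
  rw [equicontinuous_restrict_iff]
  intro x hx U hU
  obtain ⟨V, hV, hVU⟩ := hT.mem_uniformity_of_prod hf hx (tendsto_swap_uniformity hU)
  filter_upwards [hV] with x' hx' y using hVU x' hx' y y.2

/-- The possible jumps `(i, j)`, `i ≠ j`, between states in `ι`. The diagonal is left out because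
the diagonal entries of a rate matrix are nonpositive and do not contribute to its action. -/
abbrev Jump (ι : Type*) : Type _ := {e : ι × ι // e.1 ≠ e.2}

/-- The flux `π i * Q i j` through each jump `(i, j)` for the rate matrix `Q`
when the state has distribution `π`. -/
def jumpFlux {ι : Type*} (Q : ι → ι → ℝ) (π : ι → ℝ) (e : Jump ι) : ℝ := π e.1.1 * Q e.1.1 e.1.2

/-- The coefficient `1 - g j / g i` with which the flux through the jump `(i, j)` enters
`-∑ z, π z * (Q g) z / g z`. -/
noncomputable def jumpCoeff {ι : Type*} (g : ι → ℝ) (e : Jump ι) : ℝ := 1 - g e.1.2 / g e.1.1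

lemma jumpFlux_nonneg {ι : Type*} {Q : ι → ι → ℝ} (hQ : ∀ i j, i ≠ j → 0 ≤ Q i j)
    {π : ι → ℝ} (hπ : 0 ≤ π) : 0 ≤ jumpFlux Q π :=
  fun e => mul_nonneg (hπ _) (hQ _ _ e.2)

lemma jumpCoeff_le_one {ι : Type*} {g : ι → ℝ} (hg : ∀ i, 0 < g i) : jumpCoeff g ≤ 1 :=
  fun _ => sub_le_self _ (div_pos (hg _) (hg _)).le

section Rate

variable {ι : Type*} [Fintype ι]

/-- The Donsker–Varadhan functional `I(π) = -inf_{g > 0} ∑ z, π z * (Q g) z / g z` of a rate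
matrix `Q` on a finite state space. The infimum is over a set bounded below as soon as the
off-diagonal entries of `Q` and the entries of `π` are nonnegative. -/
noncomputable def donskerVaradhanRate (Q : ι → ι → ℝ) (π : ι → ℝ) : ℝ :=
  -sInf {s : ℝ | ∃ g : ι → ℝ, (∀ i, 0 < g i) ∧
    s = ∑ z, π z * (∑ j, Q z j * (g j - g z)) / g z}

lemma jumpCoeff_dotProduct_jumpFlux [DecidableEq ι] {g : ι → ℝ} (hg : ∀ i, 0 < g i)
    (Q : ι → ι → ℝ) (π : ι → ℝ) :
    jumpCoeff g ⬝ᵥ jumpFlux Q π = -∑ z, π z * (∑ j, Q z j * (g j - g z)) / g z := by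
  let term (e : ι × ι) : ℝ := (1 - g e.2 / g e.1) * (π e.1 * Q e.1 e.2)
  have hne (e : ι × ι) (he : term e ≠ 0) : e.1 ≠ e.2 := by
    intro h
    simp [term, ← h, (hg e.1).ne'] at he
  calc jumpCoeff g ⬝ᵥ jumpFlux Q π = ∑ e with e.1 ≠ e.2, term e :=
        (Finset.sum_subtype _ (by simp) term).symm
    _ = ∑ e, term e := Finset.sum_filter_of_ne fun e _ => hne e
    _ = ∑ z, ∑ j, term (z, j) := Fintype.sum_prod_type _
    _ = -∑ z, π z * (∑ j, Q z j * (g j - g z)) / g z := by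
        simp only [Finset.mul_sum, Finset.sum_div, ← Finset.sum_neg_distrib]
        refine Finset.sum_congr rfl fun z _ => Finset.sum_congr rfl fun j _ => ?_
        have hgz : g z ≠ 0 := (hg z).ne'
        simp only [term]
        field_simp
        ring

lemma donskerVaradhanRate_eq_iSup [DecidableEq ι] (Q : ι → ι → ℝ) (π : ι → ℝ) :
    donskerVaradhanRate Q π =
      ⨆ g : {g : ι → ℝ // ∀ i, 0 < g i}, jumpCoeff g.1 ⬝ᵥ jumpFlux Q π := by
  rw [donskerVaradhanRate, Real.sInf_def, neg_neg, iSup]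
  congr 1
  ext s
  simp only [Set.mem_neg, mem_ofPred_eq, mem_range, Subtype.exists]
  refine exists_congr fun g => ?_
  rw [← exists_prop]
  refine exists_congr fun hg => ?_
  rw [jumpCoeff_dotProduct_jumpFlux hg, neg_eq_iff_eq_neg, eq_comm]

lemma continuousOn_uncurry_donskerVaradhanRate :
    ContinuousOn (Function.uncurry (donskerVaradhanRate (ι := ι)))
      ({Q | ∀ i j, i ≠ j → 0 ≤ Q i j} ×ˢ Ici 0) := by
  classical
  have : Nonempty {g : ι → ℝ // ∀ i, 0 < g i} := ⟨⟨1, fun _ => one_pos⟩⟩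
  have hflux : Continuous (Function.uncurry (jumpFlux (ι := ι))) := by
    unfold jumpFlux Function.uncurry
    fun_prop
  have hrate : Function.uncurry (donskerVaradhanRate (ι := ι)) =
      (fun r => ⨆ g : {g : ι → ℝ // ∀ i, 0 < g i}, jumpCoeff g.1 ⬝ᵥ r) ∘
        Function.uncurry jumpFlux :=
    funext fun p => donskerVaradhanRate_eq_iSup p.1 p.2
  rw [hrate]
  exact (continuousOn_iSup_dotProduct fun g => jumpCoeff_le_one g.2).comp hflux.continuousOn
    fun p hp => jumpFlux_nonneg hp.1 hp.2

theorem donsker_varadhan_equicontinuous_general {X : Type*} [UniformSpace X]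
    {q : X → ι → ι → ℝ} {K : Set X} (hK : IsCompact K)
    (hoff : ∀ x ∈ K, ∀ i j, i ≠ j → 0 ≤ q x i j) (hq : ContinuousOn q K) :
    UniformEquicontinuousOn
      (fun (π : stdSimplex ℝ ι) x => donskerVaradhanRate (q x) π.1) K := by
  have hmaps : MapsTo (Prod.map q id) (K ×ˢ stdSimplex ℝ ι)
      ({Q | ∀ i j, i ≠ j → 0 ≤ Q i j} ×ˢ Ici 0) :=
    fun p hp => ⟨hoff p.1 hp.1, hp.2.1⟩
  have hjoint :=
    continuousOn_uncurry_donskerVaradhanRate.comp (hq.prodMap continuousOn_id) hmaps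
  exact uniformEquicontinuousOn_of_continuousOn_prod (f := fun x => donskerVaradhanRate (q x))
    hK (isCompact_stdSimplex ℝ ι) hjoint

end Rate

/-- **Equicontinuity of the Donsker–Varadhan functional in the spatial variable.**
If `x ↦ q x` is a family of conservative irreducible rate matrices on `Fin N`,
uniformly bounded and locally Lipschitz on compacts, then for every compact `K`
the family `{x ↦ I(x, π) : π ∈ 𝒫(S)}` is uniformly equicontinuous on `K`. -/
theorem donsker_varadhan_equicontinuous
    {M : Type*} [MetricSpace M] (N : ℕ) (hN : 0 < N)
    (q : M → Fin N → Fin N → ℝ)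
    (hoff : ∀ x, ∀ i j, i ≠ j → 0 ≤ q x i j)
    (hcons : ∀ x, ∀ i, ∑ j, q x i j = 0)
    (hirr : ∀ x, ∀ i j : Fin N, i ≠ j → ∃ k : ℕ, ∃ path : Fin (k + 1) → Fin N,
      path 0 = i ∧ path (Fin.last k) = j ∧
      ∀ l : Fin k, 0 < q x (path l.castSucc) (path l.succ))
    (hbdd : ∃ C : ℝ, ∀ x, ∀ i, - q x i i ≤ C)
    (hlip : ∀ K : Set M, IsCompact K → ∃ C > (0:ℝ), ∀ x ∈ K, ∀ y ∈ K, ∀ i j,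
      |q x i j - q y i j| ≤ C * dist x y)
    (I : M → (Fin N → ℝ) → ℝ)
    (hI : ∀ x π, I x π = - sInf {s : ℝ | ∃ g : Fin N → ℝ, (∀ i, 0 < g i) ∧
      s = ∑ z, π z * (∑ j, q x z j * (g j - g z)) / g z}) :
    ∀ K : Set M, IsCompact K → ∀ ε > (0:ℝ), ∃ δ > (0:ℝ),
      ∀ π : Fin N → ℝ, (∀ i, 0 ≤ π i) → (∑ i, π i = 1) →
      ∀ x ∈ K, ∀ y ∈ K, dist x y < δ → |I x π - I y π| ≤ ε := by
  intro K hK ε hε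
  obtain ⟨C, -, hC⟩ := hlip K hK
  have hq : ContinuousOn q K := continuousOn_pi.2 fun i => continuousOn_pi.2 fun j =>
    (LipschitzOnWith.of_dist_le' fun x hx y hy => hC x hx y hy i j).continuousOn
  obtain ⟨δ, hδ, h⟩ := uniformEquicontinuousOn_iff_dist_lt.1
    (donsker_varadhan_equicontinuous_general hK (fun x _ => hoff x) hq) ε hε
  simp only [hI]
  exact ⟨δ, hδ, fun π hπ hsum x hx y hy hxy => (h x hx y hy hxy ⟨π, hπ, hsum⟩).le⟩
end

section
/- Let H : ℝ^d × ℝ^d → ℝ be continuous, with p ↦ H(x,p) convex for every x and H(x,0) = 0 for all x, and let L be its Lagrangian. Then for every compact set K ⊆ ℝ^d and every c > 0 there exists a right-continuous nondecreasing function ψ : [0,∞) → [0,∞) with lim_{r → ∞} ψ(r)/r = 0 such that |⟨p,v⟩| ≤ ψ(L(x,v)) for all x ∈ K, all v ∈ ℝ^d, and all p ∈ ℝ^d with |p| ≤ c. -/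
/-!
Let `M n ≥ 0` bound `H` above on `K × closedBall 0 ((n + 1) c)`. Testing the supremum defining
`L(x,v) ≤ r` with the momenta `± (n + 1) p` gives `(n + 1) |⟨p,v⟩| ≤ r + M n` for `‖p‖ ≤ c`, hence
`|⟨p,v⟩| ≤ ψ r` with `ψ r = inf_n (r + M n) / (n + 1)`. As an infimum of increasing affine
functions, `ψ` is nondecreasing and concave on all of `ℝ`, hence continuous, and it is sublinear
because the slopes `1 / (n + 1)` tend to `0`.
-/

open scoped RealInnerProductSpace
open Filter

/-- The Lagrangian `L(x,v) = sup_p (⟨p,v⟩ − H(x,p))`, valued in `EReal`. -/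
noncomputable def Lagrangian {d : ℕ}
    (H : EuclideanSpace ℝ (Fin d) → EuclideanSpace ℝ (Fin d) → ℝ)
    (x v : EuclideanSpace ℝ (Fin d)) : EReal :=
  ⨆ p : EuclideanSpace ℝ (Fin d), ((⟪p, v⟫ - H x p : ℝ) : EReal)

open Set Topology

lemma concaveOn_ciInf {E ι : Type*} [AddCommMonoid E] [SMul ℝ E] [Nonempty ι] {s : Set E}
    {f : ι → E → ℝ} (hf : ∀ i, ConcaveOn ℝ s (f i))
    (hbdd : ∀ x ∈ s, BddBelow (range fun i => f i x)) :
    ConcaveOn ℝ s fun x => ⨅ i, f i x := by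
  refine ⟨(hf (Classical.arbitrary ι)).1, fun x hx y hy a b ha hb hab => le_ciInf fun i => ?_⟩
  calc a • (⨅ i, f i x) + b • (⨅ i, f i y)
      ≤ a • f i x + b • f i y := by
        gcongr
        · exact ciInf_le (hbdd x hx) i
        · exact ciInf_le (hbdd y hy) i
    _ ≤ f i (a • x + b • y) := (hf i).2 hx hy ha hb hab

/-- The lower envelope of the affine functions `r ↦ a i * r + b i` with slopes `a` and intercepts
`b`; the control function `ψ` is of this form. It takes the junk value `0` at points where the
family is unbounded below. -/
noncomputable def affineEnvelope {ι : Type*} (a b : ι → ℝ) (r : ℝ) : ℝ :=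
  ⨅ i, (a i * r + b i)

section affineEnvelope

variable {ι : Type*} {a b : ι → ℝ}

lemma affineEnvelope_nonneg (ha : ∀ i, 0 ≤ a i) (hb : ∀ i, 0 ≤ b i) {r : ℝ} (hr : 0 ≤ r) :
    0 ≤ affineEnvelope a b r :=
  Real.iInf_nonneg fun i => add_nonneg (mul_nonneg (ha i) hr) (hb i)

lemma monotone_affineEnvelope (ha : ∀ i, 0 ≤ a i)
    (hbdd : ∀ r, BddBelow (range fun i => a i * r + b i)) : Monotone (affineEnvelope a b) :=
  fun r s hrs => ciInf_mono (hbdd r) fun i => by gcongr; exact ha i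

variable [Nonempty ι]

lemma concaveOn_affineEnvelope (hbdd : ∀ r, BddBelow (range fun i => a i * r + b i)) :
    ConcaveOn ℝ univ (affineEnvelope a b) :=
  concaveOn_ciInf
    (fun i => ((LinearMap.mulLeft ℝ (a i)).concaveOn convex_univ).add_const (b i))
    fun r _ => hbdd r

lemma continuous_affineEnvelope (hbdd : ∀ r, BddBelow (range fun i => a i * r + b i)) :
    Continuous (affineEnvelope a b) :=
  continuousOn_univ.1 ((concaveOn_affineEnvelope hbdd).continuousOn isOpen_univ)

lemma tendsto_affineEnvelope_div_atTop (ha : ∀ i, 0 ≤ a i) (hb : ∀ i, 0 ≤ b i) :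
    Tendsto (fun r => affineEnvelope a b r / r) atTop (𝓝 (⨅ i, a i)) := by
  have ha_bdd : BddBelow (range a) := ⟨0, forall_mem_range.2 ha⟩
  refine tendsto_order.2 ⟨fun m hm => ?_, fun m hm => ?_⟩
  · filter_upwards [eventually_gt_atTop 0] with r hr
    refine hm.trans_le ((le_div_iff₀ hr).2 (le_ciInf fun i => ?_))
    calc (⨅ i, a i) * r ≤ a i * r := by gcongr; exact ciInf_le ha_bdd i
      _ ≤ a i * r + b i := le_add_of_nonneg_right (hb i)
  · obtain ⟨i, hi⟩ := exists_lt_of_ciInf_lt hm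
    have hline : Tendsto (fun r => a i + b i / r) atTop (𝓝 (a i)) := by
      simpa only [add_zero, id_eq] using (tendsto_id.const_div_atTop (b i)).const_add (a i)
    filter_upwards [eventually_gt_atTop 0, hline.eventually_lt_const hi] with r hr hlt
    have hbdd : BddBelow (range fun i => a i * r + b i) :=
      ⟨0, forall_mem_range.2 fun i => add_nonneg (mul_nonneg (ha i) hr.le) (hb i)⟩
    calc affineEnvelope a b r / r ≤ (a i * r + b i) / r := by gcongr; exact ciInf_le hbdd i
      _ = a i + b i / r := by field_simp
      _ < m := hlt

end affineEnvelope

lemma iInf_one_div_nat_add_one : ⨅ n : ℕ, 1 / ((n : ℝ) + 1) = 0 :=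
  (isGLB_of_tendsto_atTop (fun _ _ h => Nat.one_div_le_one_div h)
    tendsto_one_div_add_atTop_nhds_zero_nat).ciInf_eq

lemma exists_sublinear_majorant (M : ℕ → ℝ) :
    ∃ ψ : ℝ → ℝ, Monotone ψ ∧ Continuous ψ ∧ (∀ r, 0 ≤ r → 0 ≤ ψ r) ∧
      Tendsto (fun r => ψ r / r) atTop (𝓝 0) ∧
      ∀ s r : ℝ, (∀ n : ℕ, ((n : ℝ) + 1) * s ≤ r + M n) → s ≤ ψ r := by
  let a : ℕ → ℝ := fun n => 1 / ((n : ℝ) + 1)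
  let b : ℕ → ℝ := fun n => max (M n) 0 / ((n : ℝ) + 1)
  have ha : ∀ n, 0 ≤ a n := fun n => by positivity
  have ha_le : ∀ n, a n ≤ 1 := fun n => by
    simpa only [a, Nat.cast_zero, zero_add, div_one] using
      Nat.one_div_le_one_div (α := ℝ) n.zero_le
  have hb : ∀ n, 0 ≤ b n := fun n => by positivity
  have hbdd : ∀ r, BddBelow (range fun n => a n * r + b n) := fun r => by
    refine ⟨-|r|, forall_mem_range.2 fun n => ?_⟩
    have hle : a n * |r| ≤ |r| := mul_le_of_le_one_left (abs_nonneg r) (ha_le n)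
    have hneg : a n * -|r| ≤ a n * r := mul_le_mul_of_nonneg_left (neg_abs_le r) (ha n)
    linarith [hb n]
  refine ⟨affineEnvelope a b, monotone_affineEnvelope ha hbdd, continuous_affineEnvelope hbdd,
    fun r => affineEnvelope_nonneg ha hb,
    iInf_one_div_nat_add_one ▸ tendsto_affineEnvelope_div_atTop ha hb,
    fun s r hs => le_ciInf fun n => ?_⟩
  calc s ≤ (r + max (M n) 0) / ((n : ℝ) + 1) := by
        rw [le_div_iff₀' (by positivity)]
        exact (hs n).trans (by gcongr; exact le_max_left _ _)
    _ = a n * r + b n := by simp only [a, b]; ring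

/-- The Fenchel conjugate `ℓ ↦ sup_p (ℓ p − f p)` of `f`, of which the Lagrangian is the instance
`f = H x`, `ℓ = ⟨·, v⟩`. It is defined on all linear functionals, with no continuity required, and
takes values in `EReal` since the supremum may be infinite. -/
noncomputable def fenchelConjugate {E : Type*} [AddCommGroup E] [Module ℝ E] (f : E → ℝ)
    (ℓ : E →ₗ[ℝ] ℝ) : EReal :=
  ⨆ p, ((ℓ p - f p : ℝ) : EReal)

lemma fenchelConjugate_le_coe_iff {E : Type*} [AddCommGroup E] [Module ℝ E] {f : E → ℝ}
    {ℓ : E →ₗ[ℝ] ℝ} {r : ℝ} : fenchelConjugate f ℓ ≤ r ↔ ∀ p, ℓ p ≤ r + f p := by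
  simp only [fenchelConjugate, iSup_le_iff, EReal.coe_le_coe_iff, sub_le_iff_le_add]

lemma mul_abs_apply_le_of_fenchelConjugate_le {E : Type*} [AddCommGroup E] [Module ℝ E]
    {f : E → ℝ} {ℓ : E →ₗ[ℝ] ℝ} {r M t : ℝ} {p : E} (h : fenchelConjugate f ℓ ≤ r)
    (hpos : f (t • p) ≤ M) (hneg : f (-(t • p)) ≤ M) : t * |ℓ p| ≤ r + M := by
  have htest := fenchelConjugate_le_coe_iff.1 h
  calc t * |ℓ p| ≤ |t * ℓ p| := by rw [abs_mul]; gcongr; exact le_abs_self t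
    _ = |ℓ (t • p)| := by rw [map_smul, smul_eq_mul]
    _ ≤ r + M := by
      refine abs_le'.2 ⟨(htest _).trans (by gcongr), ?_⟩
      rw [← map_neg]
      exact (htest _).trans (by gcongr)

lemma lagrangian_eq_fenchelConjugate {d : ℕ}
    (H : EuclideanSpace ℝ (Fin d) → EuclideanSpace ℝ (Fin d) → ℝ)
    (x v : EuclideanSpace ℝ (Fin d)) :
    Lagrangian H x v = fenchelConjugate (H x) (innerₗ (EuclideanSpace ℝ (Fin d)) v) := by
  simp only [Lagrangian, fenchelConjugate, innerₗ_apply_apply, real_inner_comm]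

theorem lagrangian_controls_pairings_general {X E : Type*} [SeminormedAddCommGroup E]
    [NormedSpace ℝ E] {H : X → E → ℝ} {K : Set X}
    (hH : ∀ R : ℝ, BddAbove (Function.uncurry H '' K ×ˢ Metric.closedBall 0 R)) (c : ℝ) :
    ∃ ψ : ℝ → ℝ, Monotone ψ ∧ Continuous ψ ∧ (∀ r, 0 ≤ r → 0 ≤ ψ r) ∧
      Tendsto (fun r => ψ r / r) atTop (𝓝 0) ∧
      ∀ x ∈ K, ∀ (ℓ : E →ₗ[ℝ] ℝ) (p : E), ‖p‖ ≤ c →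
        ∀ r : ℝ, fenchelConjugate (H x) ℓ ≤ r → |ℓ p| ≤ ψ r := by
  choose M hM using fun n : ℕ => hH (((n : ℝ) + 1) * c)
  obtain ⟨ψ, hmono, hcont, hnonneg, hlim, hψ⟩ := exists_sublinear_majorant M
  refine ⟨ψ, hmono, hcont, hnonneg, hlim, fun x hx ℓ p hp r hr => hψ _ r fun n => ?_⟩
  have hH_le : ∀ q : E, ‖q‖ ≤ ((n : ℝ) + 1) * c → H x q ≤ M n := fun q hq =>
    forall_mem_image.1 (hM n) (mk_mem_prod hx (mem_closedBall_zero_iff.2 hq))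
  have hnorm : ‖((n : ℝ) + 1) • p‖ ≤ ((n : ℝ) + 1) * c := by
    rw [norm_smul, Real.norm_of_nonneg (by positivity)]
    gcongr
  exact mul_abs_apply_le_of_fenchelConjugate_le hr (hH_le _ hnorm)
    (hH_le _ (by rwa [norm_neg]))

/-- **Control of momenta pairings by the Lagrangian** (Proposition 5.6 (3), Euclidean
chart): for every compact `K` and every `c > 0` there is a right-continuous
nondecreasing function `ψ : [0,∞) → [0,∞)` with `ψ(r)/r → 0` such that
`|⟨p,v⟩| ≤ ψ(L(x,v))` for `x ∈ K`, `v ∈ ℝ^d` and `‖p‖ ≤ c`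
(formulated via all real upper bounds `r` of `L(x,v)`, which is equivalent by
monotonicity of `ψ`). -/
theorem lagrangian_controls_pairings
    {d : ℕ} (H : EuclideanSpace ℝ (Fin d) → EuclideanSpace ℝ (Fin d) → ℝ)
    (hHc : Continuous fun p : EuclideanSpace ℝ (Fin d) × EuclideanSpace ℝ (Fin d) => H p.1 p.2)
    (hconv : ∀ x, ConvexOn ℝ Set.univ (H x))
    (hH0 : ∀ x, H x 0 = 0) :
    ∀ K : Set (EuclideanSpace ℝ (Fin d)), IsCompact K → ∀ c : ℝ, 0 < c →
      ∃ ψ : ℝ → ℝ,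
        MonotoneOn ψ (Set.Ici 0) ∧
        (∀ r : ℝ, 0 ≤ r → 0 ≤ ψ r) ∧
        (∀ r : ℝ, 0 ≤ r → ContinuousWithinAt ψ (Set.Ici r) r) ∧
        Tendsto (fun r : ℝ => ψ r / r) atTop (nhds 0) ∧
        ∀ x ∈ K, ∀ v p : EuclideanSpace ℝ (Fin d), ‖p‖ ≤ c →
          ∀ r : ℝ, Lagrangian H x v ≤ (r : EReal) → |⟪p, v⟫| ≤ ψ r := by
  intro K hK c _
  obtain ⟨ψ, hmono, hcont, hnonneg, hlim, hψ⟩ := lagrangian_controls_pairings_general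
    (fun R => ((hK.prod (isCompact_closedBall 0 R)).image hHc).bddAbove) c
  refine ⟨ψ, hmono.monotoneOn _, hnonneg, fun r _ => hcont.continuousWithinAt, hlim,
    fun x hx v p hp r hr => ?_⟩
  rw [lagrangian_eq_fenchelConjugate] at hr
  simpa only [innerₗ_apply_apply, real_inner_comm] using hψ x hx _ p hp r hr
end

section
/- Let H : ℝ^d × ℝ^d → ℝ be continuous, with p ↦ H(x,p) convex for every x and H(x,0) = 0 for all x, and let L be its Lagrangian. Suppose Υ : ℝ^d → [0,∞) is continuously differentiable, has compact sublevel sets, and satisfies C_H := sup_{z ∈ ℝ^d} H(z, ∇Υ(z)) < ∞. Then for every compact K ⊆ ℝ^d, every T > 0 and every C ≥ 0, every absolutely continuous curve x : [0,T] → ℝ^d with x(0) ∈ K and ∫₀^T L(x(s), ẋ(s)) ds ≤ C satisfies Υ(x(t)) ≤ sup_{y ∈ K} Υ(y) + C + T·C_H for all t ∈ [0,T]; in particular there is a compact set K̂ (depending only on K, T, C) containing x(t) for all t ∈ [0,T] and all such curves. -/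
/-!
Along a curve `x`, the chain rule and the Fenchel–Young inequality `⟪p, v⟫ ≤ L(x, v) + H(x, p)` at
`p = ∇Υ(x)` give `d/dt Υ(x(t)) ≤ L(x, ẋ) + C_H` for almost every `t`. As `Υ` is locally Lipschitz,
`Υ ∘ x` is absolutely continuous, so this integrates to `Υ(x(t)) ≤ Υ(x(0)) + ∫₀ᵗ L + t C_H`. The
right-hand side is nondecreasing in `t`: `L ≥ 0` because `H(x, 0) = 0`, and `C_H ≥ 0` because `∇Υ`
vanishes at a minimizer of `Υ`. The set `K̂` is then a sublevel set of `Υ`.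
-/

open scoped RealInnerProductSpace
open MeasureTheory

section AbsoluteContinuity

theorem absolutelyContinuousOnInterval_of_dist_le {X Y : Type*} [PseudoMetricSpace X]
    [PseudoMetricSpace Y] {f : ℝ → X} {g : ℝ → Y} {a b M : ℝ}
    (hf : AbsolutelyContinuousOnInterval f a b)
    (h : ∀ s ∈ Set.uIcc a b, ∀ t ∈ Set.uIcc a b, dist (g s) (g t) ≤ M * dist (f s) (f t)) :
    AbsolutelyContinuousOnInterval g a b := by
  have hlim := Filter.Tendsto.const_mul M hf
  rw [mul_zero] at hlim
  refine squeeze_zero'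
    (Filter.Eventually.of_forall fun _ ↦ Finset.sum_nonneg fun _ _ ↦ dist_nonneg) ?_ hlim
  refine Filter.eventually_inf_principal.2 (Filter.Eventually.of_forall fun I hI ↦ ?_)
  rw [Finset.mul_sum]
  exact Finset.sum_le_sum fun i hi ↦ h _ (hI.1 i hi).1 _ (hI.1 i hi).2

theorem absolutelyContinuousOnInterval_comp_of_locallyLipschitz {F Y : Type*}
    [SeminormedAddCommGroup F] [PseudoMetricSpace Y] {φ : F → Y} {f : ℝ → F} {a b : ℝ}
    (hφ : LocallyLipschitz φ) (hf : AbsolutelyContinuousOnInterval f a b) :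
    AbsolutelyContinuousOnInterval (φ ∘ f) a b := by
  obtain ⟨M, hM⟩ := hφ.locallyLipschitzOn.exists_lipschitzOnWith_of_compact
    (isCompact_uIcc.image_of_continuousOn hf.continuousOn)
  exact absolutelyContinuousOnInterval_of_dist_le hf fun s hs t ht ↦
    hM.dist_le_mul _ (Set.mem_image_of_mem f hs) _ (Set.mem_image_of_mem f ht)

variable {E : Type*} [NormedAddCommGroup E] [NormedSpace ℝ E]

theorem absolutelyContinuousOnInterval_integral {v : ℝ → E} {a b : ℝ}
    (hv : IntervalIntegrable v volume a b) :
    AbsolutelyContinuousOnInterval (fun t ↦ ∫ s in a..t, v s) a b := by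
  refine absolutelyContinuousOnInterval_of_dist_le (M := 1)
    (hv.norm.absolutelyContinuousOnInterval_intervalIntegral Set.left_mem_uIcc) fun s hs t ht ↦ ?_
  have hint : ∀ r ∈ Set.uIcc a b, IntervalIntegrable v volume a r := fun r hr ↦
    hv.mono_set (Set.uIcc_subset_uIcc_left hr)
  rw [one_mul, dist_eq_norm, dist_eq_norm,
    intervalIntegral.integral_interval_sub_left (hint s hs) (hint t ht),
    intervalIntegral.integral_interval_sub_left (hint s hs).norm (hint t ht).norm]
  exact intervalIntegral.norm_integral_le_abs_integral_norm

end AbsoluteContinuity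

/-- The curve `x` is absolutely continuous between `a` and `b` with velocity `x'`, in the form given
by the fundamental theorem of calculus; nothing is required of `x` outside `Set.uIcc a b`. -/
structure HasIntegrableVelocity {E : Type*} [NormedAddCommGroup E] [NormedSpace ℝ E]
    (x x' : ℝ → E) (a b : ℝ) : Prop where
  intervalIntegrable : IntervalIntegrable x' volume a b
  eq_add_integral : ∀ t ∈ Set.uIcc a b, x t = x a + ∫ s in a..t, x' s

namespace HasIntegrableVelocity

variable {E : Type*} [NormedAddCommGroup E] [NormedSpace ℝ E] {x x' : ℝ → E} {a b : ℝ}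

theorem mono_right (hx : HasIntegrableVelocity x x' a b) {c : ℝ} (hc : c ∈ Set.uIcc a b) :
    HasIntegrableVelocity x x' a c where
  intervalIntegrable := hx.intervalIntegrable.mono_set (Set.uIcc_subset_uIcc_left hc)
  eq_add_integral t ht := hx.eq_add_integral t (Set.uIcc_subset_uIcc_left hc ht)

theorem absolutelyContinuousOnInterval (hx : HasIntegrableVelocity x x' a b) :
    AbsolutelyContinuousOnInterval x a b :=
  absolutelyContinuousOnInterval_of_dist_le (M := 1)
    (absolutelyContinuousOnInterval_integral hx.intervalIntegrable) fun s hs t ht ↦ by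
      rw [hx.eq_add_integral s hs, hx.eq_add_integral t ht, dist_add_left, one_mul]

variable [CompleteSpace E]

theorem ae_hasDerivAt (hx : HasIntegrableVelocity x x' a b) :
    ∀ᵐ t, t ∈ Set.uIcc a b → HasDerivAt x (x' t) t := by
  filter_upwards [hx.intervalIntegrable.ae_hasDerivAt_integral, Measure.ae_ne volume (a ⊓ b),
    Measure.ae_ne volume (a ⊔ b)] with t hderiv hmin hmax ht
  have hnhds : Set.uIcc a b ∈ nhds t :=
    Icc_mem_nhds (lt_of_le_of_ne ht.1 hmin.symm) (lt_of_le_of_ne ht.2 hmax)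
  refine ((hderiv ht a Set.left_mem_uIcc).const_add (x a)).congr_of_eventuallyEq ?_
  exact Filter.eventually_of_mem hnhds hx.eq_add_integral

variable {f : E → ℝ}

theorem ae_deriv_comp_eq_fderiv (hx : HasIntegrableVelocity x x' a b) (hf : Differentiable ℝ f) :
    ∀ᵐ t, t ∈ Set.uIcc a b → deriv (f ∘ x) t = fderiv ℝ f (x t) (x' t) := by
  filter_upwards [hx.ae_hasDerivAt] with t ht hmem
  exact ((hf (x t)).hasFDerivAt.comp_hasDerivAt t (ht hmem)).deriv

theorem sub_le_integral_of_fderiv_le (hx : HasIntegrableVelocity x x' a b) (hab : a ≤ b)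
    (hf : ContDiff ℝ 1 f) {g : ℝ → ℝ} (hg : IntervalIntegrable g volume a b)
    (hle : ∀ᵐ t, t ∈ Set.uIcc a b → fderiv ℝ f (x t) (x' t) ≤ g t) :
    f (x b) - f (x a) ≤ ∫ t in a..b, g t := by
  have hac : AbsolutelyContinuousOnInterval (f ∘ x) a b :=
    absolutelyContinuousOnInterval_comp_of_locallyLipschitz hf.locallyLipschitz
      hx.absolutelyContinuousOnInterval
  refine hac.integral_deriv_eq_sub.symm.trans_le
    (intervalIntegral.integral_mono_ae_restrict hab hac.intervalIntegrable_deriv hg ?_)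
  rw [← Set.uIcc_of_le hab, Filter.EventuallyLE, ae_restrict_iff' measurableSet_uIcc]
  filter_upwards [hx.ae_deriv_comp_eq_fderiv (hf.differentiable one_ne_zero), hle]
    with t hderiv hbound ht
  exact (hderiv ht).trans_le (hbound ht)

end HasIntegrableVelocity

section Containment

variable {E : Type*} [NormedAddCommGroup E] [InnerProductSpace ℝ E]

/-- The curve `x` is absolutely continuous on `[0, T]` and has Lagrangian cost at most `C`. The
function `ℓ` is an integrable majorant of `L(x, ẋ)`: the inequality for all `p` says
`L(x, ẋ) ≤ ℓ` without passing to extended reals. -/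
def HasLagrangianCostLE (H : E → E → ℝ) (T C : ℝ) (x : ℝ → E) : Prop :=
  ∃ (x' : ℝ → E) (ℓ : ℝ → ℝ), HasIntegrableVelocity x x' 0 T ∧ IntervalIntegrable ℓ volume 0 T ∧
    (∀ᵐ s, s ∈ Set.uIcc 0 T → ∀ p, ⟪p, x' s⟫ - H (x s) p ≤ ℓ s) ∧ ∫ s in (0 : ℝ)..T, ℓ s ≤ C

variable [CompleteSpace E]

theorem exists_gradient_eq_zero_of_isCompact_sublevel {f : E → ℝ} (hf : Continuous f) {x₀ : E}
    (hcompact : IsCompact {x | f x ≤ f x₀}) : ∃ z, gradient f z = 0 := by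
  have hlarge : ∀ᶠ x in Filter.cocompact E, f x₀ ≤ f x := by
    filter_upwards [hcompact.compl_mem_cocompact] with x hx using le_of_not_ge hx
  obtain ⟨z, hz⟩ := hf.exists_forall_le' x₀ hlarge
  have hmin : IsLocalMin f z := .of_forall hz
  exact ⟨z, by rw [gradient, hmin.fderiv_eq_zero, map_zero]⟩

variable {H : E → E → ℝ} {Υ : E → ℝ} {CH T : ℝ}

theorem le_add_integral_add_of_hamiltonian_gradient_le (hΥ : ContDiff ℝ 1 Υ)
    (hCH : ∀ z, H z (gradient Υ z) ≤ CH) {x x' : ℝ → E} {ℓ : ℝ → ℝ} (hT : 0 ≤ T)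
    (hx : HasIntegrableVelocity x x' 0 T) (hℓ : IntervalIntegrable ℓ volume 0 T)
    (hle : ∀ᵐ s, s ∈ Set.uIcc 0 T → ∀ p, ⟪p, x' s⟫ - H (x s) p ≤ ℓ s) :
    Υ (x T) ≤ Υ (x 0) + (∫ s in (0 : ℝ)..T, ℓ s) + T * CH := by
  have hderiv : ∀ᵐ s, s ∈ Set.uIcc 0 T → fderiv ℝ Υ (x s) (x' s) ≤ ℓ s + CH := by
    filter_upwards [hle] with s hs hmem
    rw [← inner_gradient_left]
    linarith [hs hmem (gradient Υ (x s)), hCH (x s)]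
  have hincrement := hx.sub_le_integral_of_fderiv_le hT hΥ
    (hℓ.add intervalIntegrable_const) hderiv
  rw [intervalIntegral.integral_add hℓ intervalIntegrable_const,
    intervalIntegral.integral_const, sub_zero, smul_eq_mul] at hincrement
  linarith

theorem HasLagrangianCostLE.apply_le {C : ℝ} {x : ℝ → E} (hx : HasLagrangianCostLE H T C x)
    (hH0 : ∀ x, H x 0 ≤ 0) (hΥ : ContDiff ℝ 1 Υ) (hCH : ∀ z, H z (gradient Υ z) ≤ CH)
    (hCH0 : 0 ≤ CH) {t : ℝ} (ht : t ∈ Set.Icc 0 T) : Υ (x t) ≤ Υ (x 0) + C + T * CH := by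
  obtain ⟨x', ℓ, hvel, hℓ, hle, hC⟩ := hx
  have htT : t ∈ Set.uIcc 0 T := Set.Icc_subset_uIcc ht
  have hsub : Set.uIcc 0 t ⊆ Set.uIcc 0 T := Set.uIcc_subset_uIcc_left htT
  have hℓ_nonneg : 0 ≤ᵐ[volume.restrict (Set.Ioc 0 T)] ℓ := by
    rw [Filter.EventuallyLE, ae_restrict_iff' measurableSet_Ioc]
    filter_upwards [hle] with s hs hmem
    calc (0 : ℝ) ≤ ⟪(0 : E), x' s⟫ - H (x s) 0 := by
          rw [inner_zero_left]
          exact sub_nonneg.2 (hH0 (x s))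
      _ ≤ ℓ s := hs (Set.Icc_subset_uIcc (Set.Ioc_subset_Icc_self hmem)) 0
  calc Υ (x t)
      ≤ Υ (x 0) + (∫ s in (0 : ℝ)..t, ℓ s) + t * CH :=
        le_add_integral_add_of_hamiltonian_gradient_le hΥ hCH ht.1 (hvel.mono_right htT)
          (hℓ.mono_set hsub) (hle.mono fun s hs hmem ↦ hs (hsub hmem))
    _ ≤ Υ (x 0) + (∫ s in (0 : ℝ)..T, ℓ s) + T * CH := by
        gcongr
        · exact intervalIntegral.integral_mono_interval le_rfl ht.1 ht.2 hℓ_nonneg hℓ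
        · exact ht.2
    _ ≤ Υ (x 0) + C + T * CH := by gcongr

theorem containment_of_bounded_cost_curves_general (hH0 : ∀ x, H x 0 = 0) (hΥ : ContDiff ℝ 1 Υ)
    (hΥcompact : ∀ c : ℝ, IsCompact {x | Υ x ≤ c}) (hCH : ∀ z, H z (gradient Υ z) ≤ CH)
    {K : Set E} (hK : BddAbove (Υ '' K)) (T C : ℝ) :
    (∀ x : ℝ → E, x 0 ∈ K → HasLagrangianCostLE H T C x →
      ∀ t ∈ Set.Icc 0 T, Υ (x t) ≤ (⨆ y : K, Υ y) + C + T * CH) ∧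
    ∃ Khat : Set E, IsCompact Khat ∧
      ∀ x : ℝ → E, x 0 ∈ K → HasLagrangianCostLE H T C x → ∀ t ∈ Set.Icc 0 T, x t ∈ Khat := by
  obtain ⟨z, hz⟩ := exists_gradient_eq_zero_of_isCompact_sublevel hΥ.continuous (hΥcompact (Υ 0))
  have hCH0 : 0 ≤ CH := by simpa only [hz, hH0] using hCH z
  have hbound : ∀ x : ℝ → E, x 0 ∈ K → HasLagrangianCostLE H T C x →
      ∀ t ∈ Set.Icc 0 T, Υ (x t) ≤ (⨆ y : K, Υ y) + C + T * CH := by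
    intro x hx0 hx t ht
    have hsup : Υ (x 0) ≤ ⨆ y : K, Υ y :=
      le_ciSup (f := fun y : K ↦ Υ y) (by rwa [Set.image_eq_range] at hK) ⟨x 0, hx0⟩
    exact (hx.apply_le (fun y ↦ (hH0 y).le) hΥ hCH hCH0 ht).trans (by gcongr)
  exact ⟨hbound, _, hΥcompact _, hbound⟩

end Containment

theorem inner_sub_le_of_coe_eq_lagrangian {d : ℕ}
    {H : EuclideanSpace ℝ (Fin d) → EuclideanSpace ℝ (Fin d) → ℝ}
    {x v : EuclideanSpace ℝ (Fin d)} {c : ℝ} (hc : (c : EReal) = Lagrangian H x v)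
    (p : EuclideanSpace ℝ (Fin d)) : ⟪p, v⟫ - H x p ≤ c := by
  rw [← EReal.coe_le_coe_iff, hc]
  exact le_iSup (fun p ↦ ((⟪p, v⟫ - H x p : ℝ) : EReal)) p

theorem hasLagrangianCostLE_of_coe_eq_lagrangian {d : ℕ}
    {H : EuclideanSpace ℝ (Fin d) → EuclideanSpace ℝ (Fin d) → ℝ} {T C : ℝ}
    {x x' : ℝ → EuclideanSpace ℝ (Fin d)} {ℓ : ℝ → ℝ} (hT : 0 ≤ T)
    (hx' : IntervalIntegrable x' volume 0 T)
    (hx : ∀ t ∈ Set.Icc 0 T, x t = x 0 + ∫ s in (0 : ℝ)..t, x' s)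
    (hℓ : IntervalIntegrable ℓ volume 0 T)
    (hL : ∀ s ∈ Set.Icc 0 T, (ℓ s : EReal) = Lagrangian H (x s) (x' s))
    (hC : ∫ s in (0 : ℝ)..T, ℓ s ≤ C) : HasLagrangianCostLE H T C x := by
  rw [← Set.uIcc_of_le hT] at hx hL
  exact ⟨x', ℓ, ⟨hx', hx⟩, hℓ,
    .of_forall fun s hs ↦ inner_sub_le_of_coe_eq_lagrangian (hL s hs), hC⟩

/-- **Containment of curves with bounded Lagrangian cost** (Proposition 5.6 (2),
Euclidean chart): if `Υ` is a `C¹` good containment function for `H`, then every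
absolutely continuous curve `x` on `[0,T]` starting in a compact `K` whose Lagrangian
cost (represented along the curve by the real-valued `ℓ`) is at most `C` satisfies
`Υ(x(t)) ≤ sup_K Υ + C + T·C_H`; in particular all such curves stay in a fixed
compact set `K̂` depending only on `K`, `T`, `C`. -/
theorem containment_of_bounded_cost_curves
    {d : ℕ} (H : EuclideanSpace ℝ (Fin d) → EuclideanSpace ℝ (Fin d) → ℝ)
    (hHc : Continuous fun p : EuclideanSpace ℝ (Fin d) × EuclideanSpace ℝ (Fin d) => H p.1 p.2)
    (hconv : ∀ x, ConvexOn ℝ Set.univ (H x))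
    (hH0 : ∀ x, H x 0 = 0)
    (Υ : EuclideanSpace ℝ (Fin d) → ℝ)
    (hΥreg : ContDiff ℝ 1 Υ) (hΥnn : ∀ x, 0 ≤ Υ x)
    (hΥcompact : ∀ c : ℝ, IsCompact {x | Υ x ≤ c})
    (CH : ℝ) (hCH : ∀ z, H z (gradient Υ z) ≤ CH) :
    ∀ K : Set (EuclideanSpace ℝ (Fin d)), IsCompact K → ∀ T : ℝ, 0 < T → ∀ C : ℝ, 0 ≤ C →
      (∀ (x x' : ℝ → EuclideanSpace ℝ (Fin d)) (ℓ : ℝ → ℝ),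
        x 0 ∈ K →
        IntervalIntegrable x' volume 0 T →
        (∀ t ∈ Set.Icc (0:ℝ) T, x t = x 0 + ∫ s in (0:ℝ)..t, x' s) →
        IntervalIntegrable ℓ volume 0 T →
        (∀ s ∈ Set.Icc (0:ℝ) T, (ℓ s : EReal) = Lagrangian H (x s) (x' s)) →
        (∫ s in (0:ℝ)..T, ℓ s) ≤ C →
        ∀ t ∈ Set.Icc (0:ℝ) T, Υ (x t) ≤ (⨆ y : K, Υ ↑y) + C + T * CH) ∧
      ∃ Khat : Set (EuclideanSpace ℝ (Fin d)), IsCompact Khat ∧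
        ∀ (x x' : ℝ → EuclideanSpace ℝ (Fin d)) (ℓ : ℝ → ℝ),
          x 0 ∈ K →
          IntervalIntegrable x' volume 0 T →
          (∀ t ∈ Set.Icc (0:ℝ) T, x t = x 0 + ∫ s in (0:ℝ)..t, x' s) →
          IntervalIntegrable ℓ volume 0 T →
          (∀ s ∈ Set.Icc (0:ℝ) T, (ℓ s : EReal) = Lagrangian H (x s) (x' s)) →
          (∫ s in (0:ℝ)..T, ℓ s) ≤ C →
          ∀ t ∈ Set.Icc (0:ℝ) T, x t ∈ Khat := by
  intro K hK T hT C _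
  obtain ⟨hbound, Khat, hKhat, hmem⟩ := containment_of_bounded_cost_curves_general hH0 hΥreg
    hΥcompact hCH (hK.image hΥreg.continuous).bddAbove T C
  exact ⟨fun x x' ℓ hx0 hx' hx hℓ hL hcost ↦
      hbound x hx0 (hasLagrangianCostLE_of_coe_eq_lagrangian hT.le hx' hx hℓ hL hcost),
    Khat, hKhat, fun x x' ℓ hx0 hx' hx hℓ hL hcost ↦
      hmem x hx0 (hasLagrangianCostLE_of_coe_eq_lagrangian hT.le hx' hx hℓ hL hcost)⟩
end

section
/- Let S be a finite set and b : ℝ^d × S → ℝ^d satisfy the linear growth bound |b(x,i)| ≤ C_b(1 + |x|) for all x ∈ ℝ^d, i ∈ S, for some constant C_b > 0. Define Υ(x) = (1/2) log(1 + |x|²). Then Υ is smooth, Υ ≥ 0, Υ(0) = 0, every sublevel set {x : Υ(x) ≤ c} is compact, and sup_{x ∈ ℝ^d, i ∈ S} ( ⟨b(x,i), ∇Υ(x)⟩ + (1/2)|∇Υ(x)|² ) < ∞. -/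
/-!
The gradient of `Υ` is `x / (1 + |x|²)`, which is bounded and decays like `1 / |x|`; the decay
exactly compensates the linear growth of `b`. Quantitatively, `|∇Υ(x)| ≤ 1/2` and
`|x| |∇Υ(x)| ≤ 1`, so Cauchy-Schwarz bounds the Hamiltonian by `(3/2) C_b + 1/8`.
-/

open scoped RealInnerProductSpace

open Filter

theorem isCompact_setOf_le_of_tendsto_cocompact {X α : Type*} [TopologicalSpace X] [LinearOrder α]
    [NoMaxOrder α] {f : X → α} (hf : LowerSemicontinuous f)
    (hlim : Tendsto f (cocompact X) atTop) (c : α) : IsCompact {x | f x ≤ c} := by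
  obtain ⟨K, hK, hKc⟩ := mem_cocompact.1 (hlim.eventually_gt_atTop c)
  refine hK.of_isClosed_subset (hf.isClosed_preimage c) fun x hx => ?_
  by_contra hxK
  exact (hKc hxK).not_ge hx

/-- The function `Υ(x) = ½ log (1 + |x|²)`, the candidate containment function for Hamiltonians
whose drift has linear growth. -/
noncomputable def logContainment {E : Type*} [SeminormedAddCommGroup E] (x : E) : ℝ :=
  (1 / 2) * Real.log (1 + ‖x‖ ^ 2)

namespace logContainment

section SeminormedAddCommGroup

variable {E : Type*} [SeminormedAddCommGroup E]

theorem nonneg (x : E) : 0 ≤ logContainment x :=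
  mul_nonneg (by norm_num) (Real.log_nonneg (le_add_of_nonneg_right (sq_nonneg ‖x‖)))

theorem map_zero : logContainment (0 : E) = 0 := by
  simp [logContainment]

theorem tendsto_cobounded_atTop :
    Tendsto (logContainment : E → ℝ) (Bornology.cobounded E) atTop := by
  have hsq : Tendsto (fun x : E => 1 + ‖x‖ ^ 2) (Bornology.cobounded E) atTop :=
    tendsto_atTop_add_const_left _ _
      ((tendsto_pow_atTop two_ne_zero).comp tendsto_norm_cobounded_atTop)
  exact (Real.tendsto_log_atTop.comp hsq).const_mul_atTop one_half_pos

end SeminormedAddCommGroup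

variable {E : Type*} [NormedAddCommGroup E] [InnerProductSpace ℝ E]

theorem contDiff {n : WithTop ℕ∞} : ContDiff ℝ n (logContainment : E → ℝ) :=
  contDiff_const.mul ((contDiff_const.add (contDiff_norm_sq ℝ)).log fun x => by positivity)

theorem isCompact_setOf_le [ProperSpace E] (c : ℝ) : IsCompact {x : E | logContainment x ≤ c} :=
  isCompact_setOf_le_of_tendsto_cocompact (contDiff (n := 0)).continuous.lowerSemicontinuous
    (Metric.cobounded_eq_cocompact (α := E) ▸ tendsto_cobounded_atTop) c

variable [CompleteSpace E]

theorem hasGradientAt (x : E) :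
    HasGradientAt (logContainment : E → ℝ) ((1 + ‖x‖ ^ 2)⁻¹ • x) x := by
  have hpos : 1 + ‖x‖ ^ 2 ≠ 0 := by positivity
  have hderiv := (((hasStrictFDerivAt_norm_sq x).hasFDerivAt.const_add 1).log hpos).const_mul
    (1 / 2 : ℝ)
  refine hasGradientAt_iff_hasFDerivAt.2 (hderiv.congr_fderiv ?_)
  ext v
  simp only [smul_apply, innerSL_apply_apply, InnerProductSpace.toDual_apply_apply,
    real_inner_smul_left, smul_eq_mul, nsmul_eq_mul]
  ring

theorem norm_gradient (x : E) : ‖gradient logContainment x‖ = ‖x‖ / (1 + ‖x‖ ^ 2) := by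
  have hpos : 0 ≤ 1 + ‖x‖ ^ 2 := by positivity
  rw [(hasGradientAt x).gradient, norm_smul, norm_inv, Real.norm_of_nonneg hpos, inv_mul_eq_div]

theorem norm_gradient_le_half (x : E) : ‖gradient logContainment x‖ ≤ 1 / 2 := by
  rw [norm_gradient, div_le_iff₀ (by positivity)]
  linarith [two_mul_le_add_sq 1 ‖x‖]

theorem norm_mul_norm_gradient_le_one (x : E) : ‖x‖ * ‖gradient logContainment x‖ ≤ 1 := by
  rw [norm_gradient, ← mul_div_assoc, ← sq]
  exact div_le_one_of_le₀ (by linarith) (by positivity)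

theorem inner_gradient_le {x v : E} {C : ℝ} (hv : ‖v‖ ≤ C * (1 + ‖x‖)) :
    ⟪v, gradient logContainment x⟫ ≤ 3 / 2 * C := by
  have hC : 0 ≤ C := nonneg_of_mul_nonneg_left ((norm_nonneg v).trans hv) (by positivity)
  calc ⟪v, gradient logContainment x⟫
      ≤ ‖v‖ * ‖gradient logContainment x‖ := real_inner_le_norm _ _
    _ ≤ C * (1 + ‖x‖) * ‖gradient logContainment x‖ := by gcongr
    _ = C * (‖gradient logContainment x‖ + ‖x‖ * ‖gradient logContainment x‖) := by ring
    _ ≤ C * (1 / 2 + 1) := by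
      gcongr
      exacts [norm_gradient_le_half x, norm_mul_norm_gradient_le_one x]
    _ = 3 / 2 * C := by ring

theorem inner_gradient_add_half_norm_sq_le {x v : E} {C : ℝ} (hv : ‖v‖ ≤ C * (1 + ‖x‖)) :
    ⟪v, gradient logContainment x⟫ + (1 / 2) * ‖gradient logContainment x‖ ^ 2 ≤
      3 / 2 * C + 1 / 8 := by
  have hsq : ‖gradient logContainment x‖ ^ 2 ≤ (1 / 2) ^ 2 := by
    gcongr
    exact norm_gradient_le_half x
  linarith [inner_gradient_le hv]

end logContainment

theorem good_containment_function_general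
    {E : Type*} [NormedAddCommGroup E] [InnerProductSpace ℝ E] [ProperSpace E] {ι : Type*}
    (b : E → ι → E) (Cb : ℝ) (hb : ∀ x i, ‖b x i‖ ≤ Cb * (1 + ‖x‖))
    (Υ : E → ℝ) (hΥ : ∀ x, Υ x = (1 / 2) * Real.log (1 + ‖x‖ ^ 2)) :
    ContDiff ℝ (⊤ : ℕ∞) Υ ∧
    (∀ x, 0 ≤ Υ x) ∧
    Υ 0 = 0 ∧
    (∀ c : ℝ, IsCompact {x | Υ x ≤ c}) ∧
    ∃ C : ℝ, ∀ x i, ⟪b x i, gradient Υ x⟫ + (1 / 2) * ‖gradient Υ x‖ ^ 2 ≤ C := by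
  obtain rfl : Υ = logContainment := funext hΥ
  exact ⟨logContainment.contDiff, logContainment.nonneg, logContainment.map_zero,
    logContainment.isCompact_setOf_le, 3 / 2 * Cb + 1 / 8,
    fun x i => logContainment.inner_gradient_add_half_norm_sq_le (hb x i)⟩

/-- **`Υ(x) = ½ log(1+|x|²)` is a good containment function** (Lemma 5.5, Euclidean
chart): if `b` has linear growth, then `Υ` is smooth, nonnegative, vanishes at `0`,
has compact sublevel sets, and `⟨b(x,i), ∇Υ(x)⟩ + ½|∇Υ(x)|²` is bounded above
uniformly in `x` and `i`. -/
theorem good_containment_function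
    {d : ℕ} {ι : Type*} [Fintype ι] [Nonempty ι]
    (b : EuclideanSpace ℝ (Fin d) → ι → EuclideanSpace ℝ (Fin d))
    (Cb : ℝ) (hCb : 0 < Cb)
    (hb : ∀ x i, ‖b x i‖ ≤ Cb * (1 + ‖x‖))
    (Υ : EuclideanSpace ℝ (Fin d) → ℝ)
    (hΥ : ∀ x, Υ x = (1/2) * Real.log (1 + ‖x‖^2)) :
    ContDiff ℝ (⊤ : ℕ∞) Υ ∧
    (∀ x, 0 ≤ Υ x) ∧
    Υ 0 = 0 ∧
    (∀ c : ℝ, IsCompact {x | Υ x ≤ c}) ∧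
    ∃ C : ℝ, ∀ x i, ⟪b x i, gradient Υ x⟫ + (1/2) * ‖gradient Υ x‖^2 ≤ C :=
  good_containment_function_general b Cb hb Υ hΥ
end

section
/- Let H : ℝ^d × ℝ^d → ℝ be continuous with p ↦ H(x,p) convex for every x and H(x,0) = 0 for all x, and let L be its Lagrangian. Let K̂ ⊆ ℝ^d be compact and f : ℝ^d → ℝ continuously differentiable with c_f := sup_{z ∈ K̂} (−H(z, ∇f(z))) < ∞. Then there exists a constant C ≥ 0, depending only on H, K̂ and f, such that every absolutely continuous curve x : [0,T₀) → K̂ satisfying the Young equality for f (that is, ∫₀^t H(x(s),∇f(x(s))) ds + ∫₀^t L(x(s),ẋ(s)) ds = ∫₀^t ⟨∇f(x(s)), ẋ(s)⟩ ds for all t < T₀) obeys ∫₀^t L(x(s), ẋ(s)) ds ≤ C t for all t < T₀. -/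
/-!
The momentum field is `p = ∇f`. The Fenchel–Young inequality at the doubled momentum `2p` reads
`2⟨p(x), ẋ⟩ ≤ L(x, ẋ) + H(x, 2p(x))`. Integrating it and replacing `∫ ⟨p(x), ẋ⟩` by means of
the Young equality leaves `2 ∫ L + 2 ∫ H(x, p(x)) ≤ ∫ L + ∫ H(x, 2p(x))`, so that one copy of
`∫ L` is absorbed and `∫ L ≤ ∫ (H(x, 2p(x)) - 2 H(x, p(x)))`. The last integrand is a continuous
function of `x`, hence bounded on the compact set `K̂`, and any nonnegative upper bound serves
as `C`.
-/

open scoped RealInnerProductSpace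
open MeasureTheory

theorem integral_le_mul_of_integral_add_eq {h ℓ w : ℝ → ℝ} {a b C : ℝ} (hab : a ≤ b)
    (hh : IntervalIntegrable h volume a b) (hℓ : IntervalIntegrable ℓ volume a b)
    (hw : IntervalIntegrable w volume a b)
    (heq : (∫ s in a..b, h s) + ∫ s in a..b, ℓ s = ∫ s in a..b, w s)
    (hle : ∀ s ∈ Set.Icc a b, 2 * w s ≤ ℓ s + 2 * h s + C) :
    ∫ s in a..b, ℓ s ≤ C * (b - a) := by
  have hwh := (hw.sub hh).const_mul 2
  calc ∫ s in a..b, ℓ s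
      = ∫ s in a..b, (2 * (w s - h s) - ℓ s) := by
        rw [intervalIntegral.integral_sub hwh hℓ, intervalIntegral.integral_const_mul,
          intervalIntegral.integral_sub hw hh]
        linarith
    _ ≤ ∫ _ in a..b, C :=
        intervalIntegral.integral_mono_on hab (hwh.sub hℓ) intervalIntegrable_const
          fun s hs => by linarith [hle s hs]
    _ = C * (b - a) := by rw [intervalIntegral.integral_const, smul_eq_mul, mul_comm]

theorem continuousOn_of_eq_add_integral {E : Type*} [NormedAddCommGroup E] [NormedSpace ℝ E]
    {x x' : ℝ → E} {a b : ℝ} (hx' : IntervalIntegrable x' volume a b)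
    (hx : ∀ t ∈ Set.uIcc a b, x t = x a + ∫ s in a..t, x' s) :
    ContinuousOn x (Set.uIcc a b) :=
  ((intervalIntegral.continuousOn_primitive_interval' hx' Set.left_mem_uIcc).const_add
    (x a)).congr hx

theorem continuousOn_apply_graph {X V Y : Type*} [TopologicalSpace X] [TopologicalSpace V]
    [TopologicalSpace Y] {H : X → V → Y} {K : Set X} {p : X → V}
    (hH : ContinuousOn (Function.uncurry H) (K ×ˢ Set.univ)) (hp : ContinuousOn p K) :
    ContinuousOn (fun z => H z (p z)) K :=
  hH.comp (continuousOn_id.prodMk hp) fun _ hz => ⟨hz, Set.mem_univ _⟩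

theorem exists_nonneg_forall_apply_two_smul_le {X V : Type*} [TopologicalSpace X]
    [TopologicalSpace V] [SMul ℝ V] [ContinuousConstSMul ℝ V] {H : X → V → ℝ} {K : Set X}
    {p : X → V} (hK : IsCompact K) (hH : ContinuousOn (Function.uncurry H) (K ×ˢ Set.univ))
    (hp : ContinuousOn p K) :
    ∃ C, 0 ≤ C ∧ ∀ z ∈ K, H z ((2 : ℝ) • p z) ≤ 2 * H z (p z) + C := by
  have hcont : ContinuousOn (fun z => H z ((2 : ℝ) • p z) - 2 * H z (p z)) K :=
    (continuousOn_apply_graph hH (hp.const_smul (2 : ℝ))).sub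
      (continuousOn_const.mul (continuousOn_apply_graph hH hp))
  obtain ⟨C, hC0, hC⟩ := (hK.bddAbove_image hcont).exists_ge 0
  exact ⟨C, hC0, fun z hz => sub_le_iff_le_add'.1 (hC _ (Set.mem_image_of_mem _ hz))⟩

section InnerProductSpace

variable {E : Type*} [NormedAddCommGroup E] [InnerProductSpace ℝ E]

theorem intervalIntegrable_inner_of_continuousOn {p v : ℝ → E} {a b : ℝ}
    (hp : ContinuousOn p (Set.uIcc a b)) (hv : IntervalIntegrable v volume a b) :
    IntervalIntegrable (fun s => ⟪p s, v s⟫) volume a b := by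
  refine (hv.norm.continuousOn_mul hp.norm).mono_fun ?_ (.of_forall fun s => ?_)
  · exact ((hp.mono Set.uIoc_subset_uIcc).aestronglyMeasurable measurableSet_uIoc).inner
      hv.aestronglyMeasurable_restrict_uIoc
  · simpa only [norm_mul, norm_norm] using norm_inner_le_norm (𝕜 := ℝ) (p s) (v s)

theorem two_mul_inner_le_of_mem_upperBounds {h : E → ℝ} {v : E} {ℓ : ℝ}
    (hℓ : ℓ ∈ upperBounds (Set.range fun q => ⟪q, v⟫ - h q)) (p : E) :
    2 * ⟪p, v⟫ ≤ ℓ + h ((2 : ℝ) • p) := by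
  have hFY : ⟪(2 : ℝ) • p, v⟫ - h ((2 : ℝ) • p) ≤ ℓ := hℓ ⟨_, rfl⟩
  rw [real_inner_smul_left] at hFY
  linarith

theorem continuous_gradient [CompleteSpace E] {f : E → ℝ} (hf : ContDiff ℝ 1 f) :
    Continuous (gradient f) :=
  (InnerProductSpace.toDual ℝ E).symm.continuous.comp (hf.continuous_fderiv one_ne_zero)

theorem lagrangian_cost_linear_growth_general [CompleteSpace E] {H : E → E → ℝ} {K : Set E}
    {p : E → E} (hK : IsCompact K)
    (hH : ContinuousOn (Function.uncurry H) (K ×ˢ Set.univ)) (hp : ContinuousOn p K) :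
    ∃ C : ℝ, 0 ≤ C ∧ ∀ (T₀ : ℝ) (x x' : ℝ → E) (ℓ : ℝ → ℝ),
      (∀ t, 0 ≤ t → t < T₀ → x t ∈ K) →
      (∀ t, 0 ≤ t → t < T₀ → IntervalIntegrable x' volume 0 t ∧
        IntervalIntegrable ℓ volume 0 t ∧ x t = x 0 + ∫ s in (0:ℝ)..t, x' s) →
      (∀ s, 0 ≤ s → s < T₀ → IsLUB (Set.range fun q => ⟪q, x' s⟫ - H (x s) q) (ℓ s)) →
      (∀ t, 0 ≤ t → t < T₀ →
        (∫ s in (0:ℝ)..t, H (x s) (p (x s))) + (∫ s in (0:ℝ)..t, ℓ s)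
          = ∫ s in (0:ℝ)..t, ⟪p (x s), x' s⟫) →
      ∀ t, 0 ≤ t → t < T₀ → (∫ s in (0:ℝ)..t, ℓ s) ≤ C * t := by
  obtain ⟨C, hC0, hC⟩ := exists_nonneg_forall_apply_two_smul_le hK hH hp
  refine ⟨C, hC0, fun T₀ x x' ℓ hxK hx hℓ hYoung t ht htT => ?_⟩
  obtain ⟨hx't, hℓt, -⟩ := hx t ht htT
  have hlt : ∀ s ∈ Set.uIcc 0 t, 0 ≤ s ∧ s < T₀ := fun s hs => by
    rw [Set.uIcc_of_le ht] at hs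
    exact ⟨hs.1, hs.2.trans_lt htT⟩
  have hmaps : Set.MapsTo x (Set.uIcc 0 t) K := fun s hs => hxK s (hlt s hs).1 (hlt s hs).2
  have hxc : ContinuousOn x (Set.uIcc 0 t) :=
    continuousOn_of_eq_add_integral hx't fun s hs => (hx s (hlt s hs).1 (hlt s hs).2).2.2
  have hpc : ContinuousOn (fun s => p (x s)) (Set.uIcc 0 t) := hp.comp hxc hmaps
  have hbound : ∀ s ∈ Set.Icc 0 t,
      2 * ⟪p (x s), x' s⟫ ≤ ℓ s + 2 * H (x s) (p (x s)) + C := fun s hs => by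
    have hsT := hs.2.trans_lt htT
    linarith [two_mul_inner_le_of_mem_upperBounds (hℓ s hs.1 hsT).1 (p (x s)),
      hC _ (hxK s hs.1 hsT)]
  simpa only [sub_zero] using integral_le_mul_of_integral_add_eq ht
    ((continuousOn_apply_graph hH hp).comp hxc hmaps).intervalIntegrable hℓt
    (intervalIntegrable_inner_of_continuousOn hpc hx't) (hYoung t ht htT) hbound

end InnerProductSpace

theorem isLUB_of_coe_eq_lagrangian {d : ℕ}
    {H : EuclideanSpace ℝ (Fin d) → EuclideanSpace ℝ (Fin d) → ℝ}
    {x v : EuclideanSpace ℝ (Fin d)} {ℓ : ℝ} (hℓ : (ℓ : EReal) = Lagrangian H x v) :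
    IsLUB (Set.range fun p => ⟪p, v⟫ - H x p) ℓ := by
  have h : IsLUB (Set.range fun p => ((⟪p, v⟫ - H x p : ℝ) : EReal)) ℓ := hℓ ▸ isLUB_iSup
  refine IsLUB.of_image EReal.coe_le_coe_iff ?_
  rwa [← Set.range_comp]

/-- **Linear-in-time bound on the Lagrangian cost** (Lemma 5.12, Euclidean chart):
for curves staying in a compact set `K̂` and satisfying the Young equality for a `C¹`
function `f` with `c_f = sup_{K̂} (−Hf) < ∞`, the Lagrangian cost (represented along the
curve by the real function `ℓ`) grows at most linearly in time, with a constant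
depending only on `H`, `K̂` and `f`. -/
theorem lagrangian_cost_linear_growth
    {d : ℕ} (H : EuclideanSpace ℝ (Fin d) → EuclideanSpace ℝ (Fin d) → ℝ)
    (hHc : Continuous fun p : EuclideanSpace ℝ (Fin d) × EuclideanSpace ℝ (Fin d) => H p.1 p.2)
    (hconv : ∀ x, ConvexOn ℝ Set.univ (H x))
    (hH0 : ∀ x, H x 0 = 0)
    (Khat : Set (EuclideanSpace ℝ (Fin d))) (hKhat : IsCompact Khat)
    (f : EuclideanSpace ℝ (Fin d) → ℝ) (hf : ContDiff ℝ 1 f)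
    (cf : ℝ) (hcf : ∀ z ∈ Khat, - H z (gradient f z) ≤ cf) :
    ∃ C : ℝ, 0 ≤ C ∧ ∀ T₀ : ℝ, 0 < T₀ →
      ∀ (x x' : ℝ → EuclideanSpace ℝ (Fin d)) (ℓ : ℝ → ℝ),
        (∀ t, 0 ≤ t → t < T₀ → x t ∈ Khat) →
        (∀ t, 0 ≤ t → t < T₀ → IntervalIntegrable x' volume 0 t ∧
          IntervalIntegrable ℓ volume 0 t ∧ x t = x 0 + ∫ s in (0:ℝ)..t, x' s) →
        (∀ s, 0 ≤ s → s < T₀ → (ℓ s : EReal) = Lagrangian H (x s) (x' s)) →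
        (∀ t, 0 ≤ t → t < T₀ →
          (∫ s in (0:ℝ)..t, H (x s) (gradient f (x s))) + (∫ s in (0:ℝ)..t, ℓ s)
            = ∫ s in (0:ℝ)..t, ⟪gradient f (x s), x' s⟫) →
        ∀ t, 0 ≤ t → t < T₀ → (∫ s in (0:ℝ)..t, ℓ s) ≤ C * t := by
  obtain ⟨C, hC0, hC⟩ := lagrangian_cost_linear_growth_general hKhat hHc.continuousOn
    (continuous_gradient hf).continuousOn
  exact ⟨C, hC0, fun T₀ _ x x' ℓ hxK hx hℓ => hC T₀ x x' ℓ hxK hx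
    fun s hs hsT => isLUB_of_coe_eq_lagrangian (hℓ s hs hsT)⟩
end

section
/- Let H : ℝ^d × ℝ^d → ℝ be continuous with p ↦ H(x,p) convex for every x and H(x,0) = 0 for all x, and let L be its Lagrangian. Suppose there is a C¹ good containment function Υ : ℝ^d → [0,∞) with compact sublevel sets and sup_z H(z, ∇Υ(z)) < ∞. Let f : ℝ^d → ℝ be bounded and continuously differentiable with c_f := sup_z (−H(z, ∇f(z))) < ∞, and let K₀ ⊆ ℝ^d be compact and T > 0. Then there is a compact set K̂ ⊆ ℝ^d such that every absolutely continuous curve x : [0,T₀) → ℝ^d with T₀ ≤ T, x(0) ∈ K₀, satisfying the Young equality for f on [0,T₀), obeys ∫₀^t L(x(s),ẋ(s)) ds ≤ 2 sup|f| + T c_f and x(t) ∈ K̂ for all t < T₀. -/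
/-!
Integrating the chain rule `d/ds f(x) = ⟨∇f(x), ẋ⟩` turns the Young equality into
`∫₀ᵗ L = f(x(t)) - f(x(0)) - ∫₀ᵗ H(x, ∇f(x)) ≤ 2 sup|f| + t c_f`. Replacing `t` by `T` needs
`0 ≤ c_f`: for `ε > 0` the function `εΥ - f` has a minimum point `z`, where `∇f(z) = ε∇Υ(z)`, so
convexity and `H(z, 0) = 0` give `-c_f ≤ H(z, ε∇Υ(z)) ≤ ε sup_y H(y, ∇Υ(y))`, and `ε → 0`.
Finally the Fenchel inequality `⟨∇Υ(x), ẋ⟩ ≤ H(x, ∇Υ(x)) + L(x, ẋ)` and the chain rule for `Υ`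
bound `Υ(x(t))`, so the curve stays in a fixed sublevel set of `Υ`.
-/

open scoped RealInnerProductSpace
open MeasureTheory

open Set Filter Topology
open scoped Gradient

section AbsoluteContinuity

lemma absolutelyContinuousOnInterval_of_dist_le_s16 {X Y : Type*} [PseudoMetricSpace X]
    [PseudoMetricSpace Y] {u : ℝ → X} {w : ℝ → Y} {a b : ℝ} (C : ℝ)
    (hw : AbsolutelyContinuousOnInterval w a b)
    (h : ∀ r ∈ uIcc a b, ∀ s ∈ uIcc a b, dist (u r) (u s) ≤ C * dist (w r) (w s)) :
    AbsolutelyContinuousOnInterval u a b := by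
  have hlim : Tendsto (fun E : ℕ × (ℕ → ℝ × ℝ) =>
      C * ∑ i ∈ Finset.range E.1, dist (w (E.2 i).1) (w (E.2 i).2))
      (AbsolutelyContinuousOnInterval.totalLengthFilter ⊓
        𝓟 (AbsolutelyContinuousOnInterval.disjWithin a b)) (𝓝 0) := by
    simpa only [mul_zero] using Tendsto.const_mul C hw
  refine squeeze_zero' (.of_forall fun _ => Finset.sum_nonneg fun _ _ => dist_nonneg)
    (eventually_inf_principal.2 (.of_forall fun E hE => ?_)) hlim
  rw [Finset.mul_sum]
  exact Finset.sum_le_sum fun i hi => h _ (hE.1 i hi).1 _ (hE.1 i hi).2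

lemma absolutelyContinuousOnInterval_comp_of_locallyLipschitz_s16 {X Y : Type*}
    [SeminormedAddCommGroup X] [PseudoMetricSpace Y] {g : X → Y} {u : ℝ → X} {a b : ℝ}
    (hg : LocallyLipschitz g) (hu : AbsolutelyContinuousOnInterval u a b) :
    AbsolutelyContinuousOnInterval (g ∘ u) a b := by
  have hcompact : IsCompact (u '' uIcc a b) := isCompact_uIcc.image_of_continuousOn hu.continuousOn
  obtain ⟨K, hK⟩ := hg.locallyLipschitzOn.exists_lipschitzOnWith_of_compact hcompact
  exact absolutelyContinuousOnInterval_of_dist_le_s16 K hu fun r hr s hs =>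
    hK.dist_le_mul _ (mem_image_of_mem u hr) _ (mem_image_of_mem u hs)

end AbsoluteContinuity

/-- The curve `x` is absolutely continuous between `a` and `b` with velocity `x'`. Absolute
continuity is encoded by `x` being a primitive of the integrable function `x'`; the values of `x'`
on a null set are irrelevant. -/
structure HasVelocityOn {E : Type*} [NormedAddCommGroup E] [NormedSpace ℝ E]
    (x x' : ℝ → E) (a b : ℝ) : Prop where
  intervalIntegrable : IntervalIntegrable x' volume a b
  eq_add_integral : ∀ s ∈ uIcc a b, x s = x a + ∫ r in a..s, x' r

namespace HasVelocityOn

section NormedSpace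

variable {E : Type*} [NormedAddCommGroup E] [NormedSpace ℝ E] {x x' : ℝ → E} {a b : ℝ}

lemma sub_eq_integral (hx : HasVelocityOn x x' a b) {r s : ℝ} (hr : r ∈ uIcc a b)
    (hs : s ∈ uIcc a b) : x s - x r = ∫ u in r..s, x' u := by
  have hint : ∀ u ∈ uIcc a b, IntervalIntegrable x' volume a u := fun u hu =>
    hx.intervalIntegrable.mono_set (uIcc_subset_uIcc left_mem_uIcc hu)
  rw [hx.eq_add_integral s hs, hx.eq_add_integral r hr, add_sub_add_left_eq_sub,
    intervalIntegral.integral_interval_sub_left (hint s hs) (hint r hr)]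

lemma absolutelyContinuousOnInterval (hx : HasVelocityOn x x' a b) :
    AbsolutelyContinuousOnInterval x a b := by
  have hnorm := hx.intervalIntegrable.norm
  have hint : ∀ u ∈ uIcc a b, IntervalIntegrable (fun r => ‖x' r‖) volume a u := fun u hu =>
    hnorm.mono_set (uIcc_subset_uIcc left_mem_uIcc hu)
  refine absolutelyContinuousOnInterval_of_dist_le_s16 1
    (hnorm.absolutelyContinuousOnInterval_intervalIntegral left_mem_uIcc) fun r hr s hs => ?_
  rw [one_mul, dist_eq_norm, Real.dist_eq, hx.sub_eq_integral hs hr,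
    intervalIntegral.integral_interval_sub_left (hint r hr) (hint s hs)]
  exact intervalIntegral.norm_integral_le_abs_integral_norm

lemma ae_hasDerivAt [CompleteSpace E] (hx : HasVelocityOn x x' a b) :
    ∀ᵐ s, s ∈ uIoc a b → HasDerivAt x (x' s) s := by
  filter_upwards [hx.intervalIntegrable.ae_hasDerivAt_integral, volume.ae_ne (max a b)]
    with s hderiv hne hs
  have hnhds : uIcc a b ∈ 𝓝 s := Icc_mem_nhds hs.1 (hs.2.lt_of_ne hne)
  exact ((hderiv (uIoc_subset_uIcc hs) a left_mem_uIcc).const_add (x a)).congr_of_eventuallyEq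
    (mem_of_superset hnhds hx.eq_add_integral)

end NormedSpace

section InnerProductSpace

variable {E : Type*} [NormedAddCommGroup E] [InnerProductSpace ℝ E] [CompleteSpace E]
  {x x' : ℝ → E} {a b : ℝ} {g : E → ℝ}

lemma ae_deriv_comp_eq_inner_gradient (hx : HasVelocityOn x x' a b) (hg : Differentiable ℝ g) :
    ∀ᵐ s, s ∈ uIoc a b → deriv (g ∘ x) s = ⟪∇ g (x s), x' s⟫ := by
  filter_upwards [hx.ae_hasDerivAt] with s hderiv hs
  rw [inner_gradient_left]
  exact ((hg (x s)).hasFDerivAt.comp_hasDerivAt s (hderiv hs)).deriv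

lemma intervalIntegrable_inner_gradient (hx : HasVelocityOn x x' a b) (hg : ContDiff ℝ 1 g) :
    IntervalIntegrable (fun s => ⟪∇ g (x s), x' s⟫) volume a b :=
  (absolutelyContinuousOnInterval_comp_of_locallyLipschitz_s16 hg.locallyLipschitz
    hx.absolutelyContinuousOnInterval).intervalIntegrable_deriv.congr_ae
      ((ae_restrict_iff' measurableSet_uIoc).2
        (hx.ae_deriv_comp_eq_inner_gradient (hg.differentiable one_ne_zero)))

lemma integral_inner_gradient (hx : HasVelocityOn x x' a b) (hg : ContDiff ℝ 1 g) :
    ∫ s in a..b, ⟪∇ g (x s), x' s⟫ = g (x b) - g (x a) := by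
  rw [← intervalIntegral.integral_congr_ae
    (hx.ae_deriv_comp_eq_inner_gradient (hg.differentiable one_ne_zero))]
  exact (absolutelyContinuousOnInterval_comp_of_locallyLipschitz_s16 hg.locallyLipschitz
    hx.absolutelyContinuousOnInterval).integral_deriv_eq_sub

lemma sub_le_integral_of_inner_gradient_le (hx : HasVelocityOn x x' a b) (hab : a ≤ b)
    (hg : ContDiff ℝ 1 g) {φ : ℝ → ℝ} (hφ : IntervalIntegrable φ volume a b)
    (hle : ∀ᵐ s, s ∈ Icc a b → ⟪∇ g (x s), x' s⟫ ≤ φ s) :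
    g (x b) - g (x a) ≤ ∫ s in a..b, φ s :=
  hx.integral_inner_gradient hg ▸ intervalIntegral.integral_mono_ae_restrict hab
    (hx.intervalIntegrable_inner_gradient hg) hφ ((ae_restrict_iff' measurableSet_Icc).2 hle)

lemma integral_cost_le_of_young_equality (hx : HasVelocityOn x x' a b) (hab : a ≤ b)
    (hg : ContDiff ℝ 1 g) {M : ℝ} (hM : ∀ z, |g z| ≤ M) {h : E → ℝ} (hh : Continuous h)
    {c : ℝ} (hc : ∀ z, -h z ≤ c) {ℓ : ℝ → ℝ}
    (hYoung : (∫ s in a..b, h (x s)) + ∫ s in a..b, ℓ s = ∫ s in a..b, ⟪∇ g (x s), x' s⟫) :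
    ∫ s in a..b, ℓ s ≤ 2 * M + (b - a) * c := by
  have hint : IntervalIntegrable (fun s => h (x s)) volume a b :=
    (hh.comp_continuousOn hx.absolutelyContinuousOnInterval.continuousOn).intervalIntegrable
  have hlow : (b - a) * -c ≤ ∫ s in a..b, h (x s) := by
    simpa only [intervalIntegral.integral_const, smul_eq_mul] using
      intervalIntegral.integral_mono_on hab intervalIntegrable_const hint
        fun s _ => neg_le.1 (hc (x s))
  rw [hx.integral_inner_gradient hg] at hYoung
  linarith [(abs_le.1 (hM (x a))).1, (abs_le.1 (hM (x b))).2]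

end InnerProductSpace

end HasVelocityOn

lemma tendsto_cocompact_atTop_of_isCompact_sublevel {X α : Type*} [TopologicalSpace X]
    [LinearOrder α] {u : X → α} (hu : ∀ c, IsCompact {z | u z ≤ c}) :
    Tendsto u (cocompact X) atTop :=
  tendsto_atTop.2 fun c => mem_of_superset (hu c).compl_mem_cocompact fun _ hz => (not_le.1 hz).le

lemma map_smul_le_of_convexOn {E : Type*} [AddCommGroup E] [Module ℝ E] {φ : E → ℝ}
    (hφ : ConvexOn ℝ univ φ) (hφ0 : φ 0 ≤ 0) (p : E) {ε : ℝ} (hε : ε ∈ Icc 0 1) :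
    φ (ε • p) ≤ ε * φ p := by
  have h := hφ.2 (mem_univ p) (mem_univ 0) hε.1 (sub_nonneg.2 hε.2) (add_sub_cancel ε 1)
  simp only [smul_zero, add_zero, smul_eq_mul] at h
  linarith [mul_nonpos_of_nonneg_of_nonpos (sub_nonneg.2 hε.2) hφ0]

section Hamiltonian

variable {E : Type*} [NormedAddCommGroup E] [InnerProductSpace ℝ E]

lemma inner_le_add_of_eq_iSup {φ : E → ℝ} {v : E} {ℓ : ℝ}
    (hℓ : (ℓ : EReal) = ⨆ p, ((⟪p, v⟫ - φ p : ℝ) : EReal)) (p : E) : ⟪p, v⟫ ≤ φ p + ℓ := by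
  have hle : ((⟪p, v⟫ - φ p : ℝ) : EReal) ≤ ℓ :=
    hℓ ▸ le_iSup (fun q : E => ((⟪q, v⟫ - φ q : ℝ) : EReal)) p
  linarith [EReal.coe_le_coe_iff.1 hle]

variable [CompleteSpace E]

lemma continuous_gradient_of_contDiff {f : E → ℝ} (hf : ContDiff ℝ 1 f) : Continuous (∇ f) :=
  (InnerProductSpace.toDual ℝ E).symm.continuous.comp (hf.continuous_fderiv one_ne_zero)

lemma exists_gradient_eq_smul_gradient {f Υ : E → ℝ} (hf : Differentiable ℝ f)
    (hfb : BddAbove (range f)) (hΥ : Differentiable ℝ Υ) (hΥlim : Tendsto Υ (cocompact E) atTop)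
    {ε : ℝ} (hε : 0 < ε) : ∃ z, ∇ f z = ε • ∇ Υ z := by
  obtain ⟨M, hM⟩ := hfb
  have hlim : Tendsto (fun z => ε * Υ z - f z) (cocompact E) atTop :=
    tendsto_atTop_mono (fun z => sub_le_sub_left (hM (mem_range_self z)) (ε * Υ z))
      (tendsto_atTop_add_const_right _ (-M) (hΥlim.const_mul_atTop hε))
  obtain ⟨z, hz⟩ := ((hΥ.continuous.const_mul ε).sub hf.continuous).exists_forall_le hlim
  have hcrit : ε • fderiv ℝ Υ z - fderiv ℝ f z = 0 :=
    IsLocalMin.hasFDerivAt_eq_zero (.of_forall hz)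
      (((hΥ z).hasFDerivAt.const_mul ε).sub (hf z).hasFDerivAt)
  exact ⟨z, by rw [gradient, gradient, ← sub_eq_zero.1 hcrit, map_smul]⟩

lemma nonneg_of_neg_hamiltonian_gradient_le {H : E → E → ℝ}
    (hH : ∀ x p, ∀ ε ∈ Icc (0 : ℝ) 1, H x (ε • p) ≤ ε * H x p)
    {Υ : E → ℝ} (hΥ : Differentiable ℝ Υ) (hΥlim : Tendsto Υ (cocompact E) atTop)
    {C : ℝ} (hC : ∀ z, H z (∇ Υ z) ≤ C)
    {f : E → ℝ} (hf : Differentiable ℝ f) (hfb : BddAbove (range f))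
    {c : ℝ} (hc : ∀ z, -H z (∇ f z) ≤ c) : 0 ≤ c := by
  have hbound : ∀ ε ∈ Ioc (0 : ℝ) 1, -c ≤ ε * C := by
    intro ε hε
    obtain ⟨z, hz⟩ := exists_gradient_eq_smul_gradient hf hfb hΥ hΥlim hε.1
    calc -c ≤ H z (∇ f z) := neg_le.1 (hc z)
      _ = H z (ε • ∇ Υ z) := by rw [hz]
      _ ≤ ε * H z (∇ Υ z) := hH z _ ε (Ioc_subset_Icc_self hε)
      _ ≤ ε * C := mul_le_mul_of_nonneg_left (hC z) hε.1.le
  have hlim : Tendsto (fun ε => ε * C) (𝓝[>] 0) (𝓝 0) :=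
    ((continuous_mul_const C).tendsto' 0 0 (zero_mul C)).mono_left nhdsWithin_le_nhds
  exact neg_nonpos.1 (ge_of_tendsto hlim (mem_of_superset (Ioc_mem_nhdsGT one_pos) hbound))

theorem compact_containment_young_curves_general {H : E → E → ℝ}
    (hH : ∀ x p, ∀ ε ∈ Icc (0 : ℝ) 1, H x (ε • p) ≤ ε * H x p)
    {Υ : E → ℝ} (hΥ : ContDiff ℝ 1 Υ) (hΥcompact : ∀ c, IsCompact {z | Υ z ≤ c})
    {C : ℝ} (hC : ∀ z, H z (∇ Υ z) ≤ C)
    {f : E → ℝ} (hf : ContDiff ℝ 1 f) (hfb : ∃ M, ∀ z, |f z| ≤ M)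
    (hHf : Continuous fun z => H z (∇ f z)) {cf : ℝ} (hcf : ∀ z, -H z (∇ f z) ≤ cf)
    {K₀ : Set E} (hK₀ : IsCompact K₀) (T : ℝ) :
    ∃ K : Set E, IsCompact K ∧ ∀ t, 0 ≤ t → t ≤ T → ∀ (x x' : ℝ → E) (ℓ : ℝ → ℝ),
      x 0 ∈ K₀ → HasVelocityOn x x' 0 t → IntervalIntegrable ℓ volume 0 t →
      (∀ᵐ s, s ∈ Icc 0 t → (ℓ s : EReal) = ⨆ p, ((⟪p, x' s⟫ - H (x s) p : ℝ) : EReal)) →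
      (∫ s in 0..t, H (x s) (∇ f (x s))) + ∫ s in 0..t, ℓ s = ∫ s in 0..t, ⟪∇ f (x s), x' s⟫ →
      ∫ s in 0..t, ℓ s ≤ 2 * (⨆ z, |f z|) + T * cf ∧ x t ∈ K := by
  obtain ⟨M, hM⟩ := hfb
  have hsup : ∀ z, |f z| ≤ ⨆ z, |f z| := le_ciSup ⟨M, forall_mem_range.2 hM⟩
  have hcf0 : 0 ≤ cf :=
    nonneg_of_neg_hamiltonian_gradient_le hH (hΥ.differentiable one_ne_zero)
      (tendsto_cocompact_atTop_of_isCompact_sublevel hΥcompact) hC (hf.differentiable one_ne_zero)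
      ⟨M, forall_mem_range.2 fun z => (abs_le.1 (hM z)).2⟩ hcf
  obtain ⟨B, hB⟩ := hK₀.bddAbove_image hΥ.continuous.continuousOn
  refine ⟨{z | Υ z ≤ B + T * |C| + (2 * (⨆ z, |f z|) + T * cf)}, hΥcompact _, ?_⟩
  intro t ht htT x x' ℓ hx0 hx hℓint hℓ hYoung
  have hcost : ∫ s in 0..t, ℓ s ≤ 2 * (⨆ z, |f z|) + T * cf := by
    have hcost_t := hx.integral_cost_le_of_young_equality ht hf hsup hHf hcf hYoung
    linarith [mul_le_mul_of_nonneg_right htT hcf0]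
  have hfenchel : ∀ᵐ s, s ∈ Icc 0 t → ⟪∇ Υ (x s), x' s⟫ ≤ |C| + ℓ s := by
    filter_upwards [hℓ] with s hs hst
    linarith [inner_le_add_of_eq_iSup (hs hst) (∇ Υ (x s)), hC (x s), le_abs_self C]
  have hΥt : Υ (x t) - Υ (x 0) ≤ t * |C| + ∫ s in 0..t, ℓ s := by
    simpa only [intervalIntegral.integral_add intervalIntegrable_const hℓint,
      intervalIntegral.integral_const, sub_zero, smul_eq_mul] using
      hx.sub_le_integral_of_inner_gradient_le ht hΥ (intervalIntegrable_const.add hℓint) hfenchel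
  refine ⟨hcost, ?_⟩
  rw [mem_ofPred_eq]
  linarith [hB (mem_image_of_mem Υ hx0), mul_le_mul_of_nonneg_right htT (abs_nonneg C)]

end Hamiltonian

/-- **Compact containment for curves satisfying the Young equality** (Corollary 5.9,
Euclidean chart): under the existence of a `C¹` good containment function `Υ`, for
bounded `C¹` `f` with `c_f = sup_z(−Hf(z)) < ∞`, every curve of length `T₀ ≤ T`
starting in the compact `K₀` and satisfying the Young equality for `f` has Lagrangian
cost at most `2 sup|f| + T c_f` and remains in a fixed compact set `K̂`. -/
theorem compact_containment_young_curves
    {d : ℕ} (H : EuclideanSpace ℝ (Fin d) → EuclideanSpace ℝ (Fin d) → ℝ)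
    (hHc : Continuous fun p : EuclideanSpace ℝ (Fin d) × EuclideanSpace ℝ (Fin d) => H p.1 p.2)
    (hconv : ∀ x, ConvexOn ℝ Set.univ (H x))
    (hH0 : ∀ x, H x 0 = 0)
    (Υ : EuclideanSpace ℝ (Fin d) → ℝ)
    (hΥreg : ContDiff ℝ 1 Υ) (hΥnn : ∀ x, 0 ≤ Υ x)
    (hΥcompact : ∀ c : ℝ, IsCompact {x | Υ x ≤ c})
    (CH : ℝ) (hCH : ∀ z, H z (gradient Υ z) ≤ CH)
    (f : EuclideanSpace ℝ (Fin d) → ℝ)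
    (hf : ContDiff ℝ 1 f) (hfb : ∃ Cf : ℝ, ∀ z, |f z| ≤ Cf)
    (cf : ℝ) (hcf : ∀ z, - H z (gradient f z) ≤ cf)
    (K₀ : Set (EuclideanSpace ℝ (Fin d))) (hK₀ : IsCompact K₀)
    (T : ℝ) (hT : 0 < T) :
    ∃ Khat : Set (EuclideanSpace ℝ (Fin d)), IsCompact Khat ∧
      ∀ T₀ : ℝ, 0 < T₀ → T₀ ≤ T →
      ∀ (x x' : ℝ → EuclideanSpace ℝ (Fin d)) (ℓ : ℝ → ℝ),
        x 0 ∈ K₀ →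
        (∀ t, 0 ≤ t → t < T₀ → IntervalIntegrable x' volume 0 t ∧
          IntervalIntegrable ℓ volume 0 t ∧ x t = x 0 + ∫ s in (0:ℝ)..t, x' s) →
        (∀ s, 0 ≤ s → s < T₀ → (ℓ s : EReal) = Lagrangian H (x s) (x' s)) →
        (∀ t, 0 ≤ t → t < T₀ →
          (∫ s in (0:ℝ)..t, H (x s) (gradient f (x s))) + (∫ s in (0:ℝ)..t, ℓ s)
            = ∫ s in (0:ℝ)..t, ⟪gradient f (x s), x' s⟫) →
        ∀ t, 0 ≤ t → t < T₀ →
          (∫ s in (0:ℝ)..t, ℓ s) ≤ 2 * (⨆ z, |f z|) + T * cf ∧ x t ∈ Khat := by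
  obtain ⟨K, hK, hcontain⟩ := compact_containment_young_curves_general
    (fun x p _ hε => map_smul_le_of_convexOn (hconv x) (hH0 x).le p hε) hΥreg hΥcompact hCH hf hfb
    (hHc.comp (continuous_id.prodMk (continuous_gradient_of_contDiff hf))) hcf hK₀ T
  refine ⟨K, hK, fun T₀ _ hT₀ x x' ℓ hx0 hAC hℓ hYoung t ht htT₀ => ?_⟩
  have hx : HasVelocityOn x x' 0 t := by
    refine ⟨(hAC t ht htT₀).1, fun s hs => ?_⟩
    rw [uIcc_of_le ht] at hs
    exact (hAC s hs.1 (hs.2.trans_lt htT₀)).2.2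
  exact hcontain t ht (htT₀.le.trans hT₀) x x' ℓ hx0 hx (hAC t ht htT₀).2.1
    (.of_forall fun s hs => hℓ s hs.1 (hs.2.trans_lt htT₀)) (hYoung t ht htT₀)
end

section
/- Let S = {1,…,N} be a finite set, b : ℝ^d × S → ℝ^d continuous, and for every x ∈ ℝ^d let (q_{ij}(x)) be a conservative rate matrix on S with each q_{ij} continuous. For n ≥ 1 define, for u : ℝ^d × S → ℝ twice continuously differentiable in x, H_n u(x,i) = ⟨b(x,i), ∇_x u(x,i)⟩ + (1/2)|∇_x u(x,i)|² + (1/(2n)) Δ_x u(x,i) + Σ_{j ∈ S} q_{ij}(x) ( e^{n(u(x,j) − u(x,i))} − 1 ). Let f ∈ C²_c(ℝ^d), let φ : ℝ^d × S → ℝ be C² in x with compact support, and set f_n(x,i) = f(x) + φ(x,i)/n. Then H_n f_n converges uniformly on ℝ^d × S, as n → ∞, to H_{f,φ}(x,i) = ⟨b(x,i), ∇f(x)⟩ + (1/2)|∇f(x)|² + Σ_{j ∈ S} q_{ij}(x) ( e^{φ(x,j) − φ(x,i)} − 1 ). -/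
open scoped RealInnerProductSpace
open Filter

/-!
With `f_r = f + r⁻¹ φ`, the exponent `r (f_r(x,j) - f_r(x,i))` equals `φ(x,j) - φ(x,i)`, so the jump
terms of `H_r f_r` and of `H_{f,φ}` coincide. By linearity of `∇` and `Δ`, the remaining terms give
`H_r f_r - H_{f,φ} = r⁻¹ (⟨b + ∇f, ∇φ⟩ + Δf/2) + r⁻² (⟨∇φ, ∇φ⟩ + Δφ)/2`.
Both brackets are bounded: `∇φ` and `Δφ` are continuous with compact support, `b + ∇f` is
continuous and `Δf` is bounded. Hence the difference is `O(1/r)` uniformly.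
-/

section UniformConvergence

variable {κ α E : Type*} {l : Filter κ}

lemma tendstoUniformly_smul_zero_of_norm_le {𝕜 : Type*} [NormedField 𝕜]
    [SeminormedAddCommGroup E] [NormedSpace 𝕜 E] {c : κ → 𝕜} {g : α → E}
    (hc : Tendsto c l (nhds 0)) (hg : ∃ C, ∀ x, ‖g x‖ ≤ C) :
    TendstoUniformly (fun t x => c t • g x) (fun _ => 0) l := by
  obtain ⟨C, hC⟩ := hg
  have hlim : Tendsto (fun t => ‖c t‖ * C) l (nhds 0) := by
    simpa only [norm_zero, zero_mul] using hc.norm.mul_const C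
  rw [Metric.tendstoUniformly_iff]
  intro ε hε
  filter_upwards [hlim.eventually_lt_const hε] with t ht x
  calc dist 0 (c t • g x) = ‖c t‖ * ‖g x‖ := by rw [dist_zero_left, norm_smul]
    _ ≤ ‖c t‖ * C := by gcongr; exact hC x
    _ < ε := ht

lemma tendstoUniformly_add_inv_smul_add_inv_sq_smul [SeminormedAddCommGroup E] [NormedSpace ℝ E]
    {G A B : α → E} (hA : ∃ C, ∀ x, ‖A x‖ ≤ C) (hB : ∃ C, ∀ x, ‖B x‖ ≤ C) :
    TendstoUniformly (fun (r : ℝ) x => G x + (r⁻¹ • A x + r⁻¹ ^ 2 • B x)) G atTop := by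
  have hinv : Tendsto (fun r : ℝ => r⁻¹) atTop (nhds 0) := tendsto_inv_atTop_zero
  have hinv_sq : Tendsto (fun r : ℝ => r⁻¹ ^ 2) atTop (nhds 0) := by
    simpa only [zero_pow two_ne_zero] using hinv.pow 2
  have hG : TendstoUniformly (fun (_ : ℝ) => G) G atTop :=
    fun _ hu => Eventually.of_forall fun _ _ => refl_mem_uniformity hu
  have hsum := hG.add ((tendstoUniformly_smul_zero_of_norm_le hinv hA).add
    (tendstoUniformly_smul_zero_of_norm_le hinv_sq hB))
  have hlim : G + ((fun _ => 0) + fun _ => 0) = G := by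
    funext x
    simp only [Pi.add_apply, add_zero]
  rwa [hlim] at hsum

lemma tendstoUniformly_prod_of_finite {ι : Type*} [Finite ι] [UniformSpace E]
    {F : κ → α × ι → E} {G : α × ι → E}
    (h : ∀ i, TendstoUniformly (fun t x => F t (x, i)) (fun x => G (x, i)) l) :
    TendstoUniformly F G l := by
  intro u hu
  filter_upwards [eventually_all.mpr fun i => h i u hu] with t ht p
  exact ht p.2 p.1

lemma tendstoUniformly_comp_index {κ' : Type*} {l' : Filter κ'} [UniformSpace E]
    {F : κ → α → E} {G : α → E} (h : TendstoUniformly F G l) {s : κ' → κ} (hs : Tendsto s l' l) :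
    TendstoUniformly (fun t => F (s t)) G l' :=
  fun u hu => hs.eventually (h u hu)

end UniformConvergence

section Gradient

open scoped Gradient InnerProductSpace ComplexConjugate

variable {𝕜 E : Type*} [RCLike 𝕜] [NormedAddCommGroup E] [InnerProductSpace 𝕜 E] [CompleteSpace E]
  {f g : E → 𝕜} {x : E}

lemma gradient_add (hf : DifferentiableAt 𝕜 f x) (hg : DifferentiableAt 𝕜 g x) :
    ∇ (f + g) x = ∇ f x + ∇ g x := by
  simp only [gradient, fderiv_add hf hg, map_add]

lemma gradient_const_smul (hg : DifferentiableAt 𝕜 g x) (c : 𝕜) :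
    ∇ (c • g) x = conj c • ∇ g x := by
  simp only [gradient, fderiv_const_smul hg c, map_smulₛₗ]

lemma continuous_gradient_s17 (hg : ContDiff 𝕜 1 g) : Continuous (∇ g) :=
  (InnerProductSpace.toDual 𝕜 E).symm.continuous.comp (hg.continuous_fderiv one_ne_zero)

lemma hasCompactSupport_gradient (hg : HasCompactSupport g) : HasCompactSupport (∇ g) :=
  (hg.fderiv 𝕜).comp_left (map_zero (InnerProductSpace.toDual 𝕜 E).symm)

lemma exists_norm_inner_gradient_le {v : E → E} (hv : Continuous v) (hg : ContDiff 𝕜 1 g)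
    (hgsupp : HasCompactSupport g) : ∃ C, ∀ x, ‖⟪v x, ∇ g x⟫_𝕜‖ ≤ C := by
  have hsupp : HasCompactSupport fun x => ⟪v x, ∇ g x⟫_𝕜 :=
    (hasCompactSupport_gradient hgsupp).mono fun x hx h => hx (by simp only [h, inner_zero_right])
  exact hsupp.exists_bound_of_continuous (hv.inner (continuous_gradient_s17 hg))

end Gradient

section Laplacian

open scoped Laplacian
open InnerProductSpace

lemma laplacian_euclideanSpace_apply {ι F : Type*} [Fintype ι] [DecidableEq ι]
    [NormedAddCommGroup F] [NormedSpace ℝ F] (g : EuclideanSpace ℝ ι → F)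
    (x : EuclideanSpace ℝ ι) :
    Δ g x = ∑ k, fderiv ℝ (fderiv ℝ g) x (EuclideanSpace.single k 1)
      (EuclideanSpace.single k 1) := by
  simp [laplacian_eq_iteratedFDeriv_orthonormalBasis g (EuclideanSpace.basisFun ι ℝ),
    iteratedFDeriv_two_apply]

variable {E F : Type*} [NormedAddCommGroup E] [InnerProductSpace ℝ E] [FiniteDimensional ℝ E]
  [NormedAddCommGroup F] [NormedSpace ℝ F] {g : E → F}

lemma continuous_laplacian (hg : ContDiff ℝ 2 g) : Continuous (Δ g) := by
  rw [laplacian_eq_iteratedFDeriv_stdOrthonormalBasis]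
  exact continuous_finsetSum _ fun _ _ => (hg.continuous_iteratedFDeriv le_rfl).eval_const _

lemma hasCompactSupport_laplacian (hg : HasCompactSupport g) : HasCompactSupport (Δ g) := by
  refine (hg.iteratedFDeriv (𝕜 := ℝ) 2).mono fun x hx h => hx ?_
  simp [laplacian_eq_iteratedFDeriv_stdOrthonormalBasis, h]

lemma exists_norm_laplacian_le (hg : ContDiff ℝ 2 g) (hgsupp : HasCompactSupport g) :
    ∃ C, ∀ x, ‖Δ g x‖ ≤ C :=
  (hasCompactSupport_laplacian hgsupp).exists_bound_of_continuous (continuous_laplacian hg)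

end Laplacian

section NonlinearGenerator

open scoped Gradient Laplacian

variable {E ι : Type*} [NormedAddCommGroup E] [InnerProductSpace ℝ E] [FiniteDimensional ℝ E]
  [Fintype ι]

/-- The nonlinear generator `H_r u = r⁻¹ e^{-ru} A_r e^{ru}` of the slow-fast switching diffusion
with drift `b` and switching rates `q`, in expanded form and with a real scale `r` in place of the
integer `n`. -/
noncomputable def nonlinearGenerator (b : E → ι → E) (q : E → ι → ι → ℝ) (r : ℝ) (u : E → ι → ℝ)
    (x : E) (i : ι) : ℝ :=
  ⟪b x i, ∇ (fun y => u y i) x⟫ + (1 / 2) * ‖∇ (fun y => u y i) x‖ ^ 2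
    + (1 / (2 * r)) * Δ (fun y => u y i) x
    + ∑ j, q x i j * (Real.exp (r * (u x j - u x i)) - 1)

/-- The limit `H_{f,φ}` of the nonlinear generators along `f + φ / r`, as `r → ∞`. -/
noncomputable def limitNonlinearGenerator (b : E → ι → E) (q : E → ι → ι → ℝ) (f : E → ℝ)
    (φ : E → ι → ℝ) (x : E) (i : ι) : ℝ :=
  ⟪b x i, ∇ f x⟫ + (1 / 2) * ‖∇ f x‖ ^ 2 + ∑ j, q x i j * (Real.exp (φ x j - φ x i) - 1)

variable {b : E → ι → E} (q : E → ι → ι → ℝ) {f : E → ℝ} {φ : E → ι → ℝ} {i : ι}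

lemma nonlinearGenerator_add_div {r : ℝ} (hr : r ≠ 0) {x : E}
    (hf : ContDiffAt ℝ 2 f x) (hφ : ContDiffAt ℝ 2 (fun y => φ y i) x) :
    nonlinearGenerator b q r (fun y j => f y + φ y j / r) x i =
      limitNonlinearGenerator b q f φ x i
        + (r⁻¹ * (⟪b x i + ∇ f x, ∇ (fun y => φ y i) x⟫ + Δ f x / 2)
          + r⁻¹ ^ 2 * ((⟪∇ (fun y => φ y i) x, ∇ (fun y => φ y i) x⟫
            + Δ (fun y => φ y i) x) / 2)) := by
  have hsum : (fun y => f y + φ y i / r) = f + r⁻¹ • fun y => φ y i := by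
    funext y
    simp only [Pi.add_apply, Pi.smul_apply, smul_eq_mul, div_eq_inv_mul]
  have hgrad : ∇ (fun y => f y + φ y i / r) x = ∇ f x + r⁻¹ • ∇ (fun y => φ y i) x := by
    have hφ' : DifferentiableAt ℝ (fun y => φ y i) x := hφ.differentiableAt two_ne_zero
    rw [hsum, gradient_add (hf.differentiableAt two_ne_zero) (hφ'.const_smul r⁻¹),
      gradient_const_smul hφ', conj_trivial]
  have hlap : Δ (fun y => f y + φ y i / r) x = Δ f x + r⁻¹ * Δ (fun y => φ y i) x := by
    have hsmul : ContDiffAt ℝ 2 (r⁻¹ • fun y => φ y i) x := hφ.const_smul r⁻¹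
    rw [hsum, hf.laplacian_add hsmul, InnerProductSpace.laplacian_smul r⁻¹ hφ,
      smul_eq_mul]
  have hexp (j : ι) : r * ((f x + φ x j / r) - (f x + φ x i / r)) = φ x j - φ x i := by
    field_simp
    ring
  simp only [nonlinearGenerator, limitNonlinearGenerator, hgrad, hlap, hexp,
    ← real_inner_self_eq_norm_sq, inner_add_left, inner_add_right, real_inner_smul_left,
    real_inner_smul_right, real_inner_comm (∇ f x)]
  field_simp
  ring

lemma tendstoUniformly_nonlinearGenerator_add_div (hb : Continuous fun x => b x i)
    (hf : ContDiff ℝ 2 f) (hfbdd : ∃ C, ∀ x, ‖Δ f x‖ ≤ C)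
    (hφ : ContDiff ℝ 2 fun x => φ x i) (hφsupp : HasCompactSupport fun x => φ x i) :
    TendstoUniformly (fun r x => nonlinearGenerator b q r (fun y j => f y + φ y j / r) x i)
      (fun x => limitNonlinearGenerator b q f φ x i) atTop := by
  have hφ₁ : ContDiff ℝ 1 fun x => φ x i := hφ.of_le one_le_two
  obtain ⟨Cf, hCf⟩ := hfbdd
  have hfirst : ∃ C, ∀ x, ‖⟪b x i + ∇ f x, ∇ (fun y => φ y i) x⟫ + Δ f x / 2‖ ≤ C := by
    obtain ⟨C, hC⟩ := exists_norm_inner_gradient_le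
      (hb.add (continuous_gradient_s17 (hf.of_le one_le_two))) hφ₁ hφsupp
    refine ⟨C + Cf / 2, fun x => norm_add_le_of_le (hC x) ?_⟩
    rw [norm_div, Real.norm_two]
    gcongr
    exact hCf x
  have hsecond : ∃ C, ∀ x, ‖(⟪∇ (fun y => φ y i) x, ∇ (fun y => φ y i) x⟫
      + Δ (fun y => φ y i) x) / 2‖ ≤ C := by
    obtain ⟨C, hC⟩ := exists_norm_inner_gradient_le (continuous_gradient_s17 hφ₁) hφ₁ hφsupp
    obtain ⟨C', hC'⟩ := exists_norm_laplacian_le hφ hφsupp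
    refine ⟨(C + C') / 2, fun x => ?_⟩
    rw [norm_div, Real.norm_two]
    gcongr
    exact norm_add_le_of_le (hC x) (hC' x)
  refine (tendstoUniformly_congr ?_).mpr
    (tendstoUniformly_add_inv_smul_add_inv_sq_smul hfirst hsecond)
  filter_upwards [eventually_ne_atTop 0] with r hr
  funext x
  exact nonlinearGenerator_add_div q hr hf.contDiffAt hφ.contDiffAt

theorem nonlinear_generator_convergence_general (hb : ∀ i, Continuous fun x => b x i)
    (hf : ContDiff ℝ 2 f) (hfbdd : ∃ C, ∀ x, ‖Δ f x‖ ≤ C)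
    (hφ : ∀ i, ContDiff ℝ 2 fun x => φ x i) (hφsupp : ∀ i, HasCompactSupport fun x => φ x i) :
    TendstoUniformly
      (fun r (p : E × ι) => nonlinearGenerator b q r (fun x i => f x + φ x i / r) p.1 p.2)
      (fun p => limitNonlinearGenerator b q f φ p.1 p.2) atTop :=
  tendstoUniformly_prod_of_finite fun i =>
    tendstoUniformly_nonlinearGenerator_add_div q (hb i) hf hfbdd (hφ i) (hφsupp i)

end NonlinearGenerator

/-- **Convergence of the nonlinear generators** (Proposition 5.1, Euclidean chart):
for `f ∈ C²_c` and `φ(·,i) ∈ C²_c`, setting `f_n(x,i) = f(x) + φ(x,i)/n`, the nonlinear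
generators
`H_n u(x,i) = ⟨b(x,i), ∇_x u⟩ + ½|∇_x u|² + (1/2n) Δ_x u + Σ_j q_{ij}(x)(e^{n(u(x,j)−u(x,i))} − 1)`
applied to `f_n` converge uniformly on `ℝ^d × S` to
`H_{f,φ}(x,i) = ⟨b(x,i), ∇f(x)⟩ + ½|∇f(x)|² + Σ_j q_{ij}(x)(e^{φ(x,j)−φ(x,i)} − 1)`.
The Laplacian is written as the sum of the second derivatives in the coordinate
directions `EuclideanSpace.single k 1`. -/
theorem nonlinear_generator_convergence
    {d N : ℕ} (hN : 0 < N)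
    (b : EuclideanSpace ℝ (Fin d) → Fin N → EuclideanSpace ℝ (Fin d))
    (hb : ∀ i, Continuous fun x => b x i)
    (q : EuclideanSpace ℝ (Fin d) → Fin N → Fin N → ℝ)
    (hq : ∀ i j, Continuous fun x => q x i j)
    (hoff : ∀ x, ∀ i j, i ≠ j → 0 ≤ q x i j)
    (hcons : ∀ x, ∀ i, ∑ j, q x i j = 0)
    (f : EuclideanSpace ℝ (Fin d) → ℝ)
    (hf : ContDiff ℝ 2 f) (hfsupp : HasCompactSupport f)
    (φ : EuclideanSpace ℝ (Fin d) → Fin N → ℝ)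
    (hφ : ∀ i, ContDiff ℝ 2 fun x => φ x i)
    (hφsupp : ∀ i, HasCompactSupport fun x => φ x i) :
    TendstoUniformly
      (fun (n : ℕ) (p : EuclideanSpace ℝ (Fin d) × Fin N) =>
        ⟪b p.1 p.2, gradient (fun y => f y + φ y p.2 / (n : ℝ)) p.1⟫
        + (1/2) * ‖gradient (fun y => f y + φ y p.2 / (n : ℝ)) p.1‖^2
        + (1/(2*(n : ℝ))) * (∑ k : Fin d,
            fderiv ℝ (fderiv ℝ fun y => f y + φ y p.2 / (n : ℝ)) p.1
              (EuclideanSpace.single k 1) (EuclideanSpace.single k 1))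
        + ∑ j, q p.1 p.2 j *
            (Real.exp ((n : ℝ) * ((f p.1 + φ p.1 j / (n : ℝ)) - (f p.1 + φ p.1 p.2 / (n : ℝ)))) - 1))
      (fun p : EuclideanSpace ℝ (Fin d) × Fin N =>
        ⟪b p.1 p.2, gradient f p.1⟫ + (1/2) * ‖gradient f p.1‖^2
        + ∑ j, q p.1 p.2 j * (Real.exp (φ p.1 j - φ p.1 p.2) - 1))
      atTop := by
  simpa only [nonlinearGenerator, limitNonlinearGenerator, laplacian_euclideanSpace_apply] using
    tendstoUniformly_comp_index (nonlinear_generator_convergence_general q hb hf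
      (exists_norm_laplacian_le hf hfsupp) hφ hφsupp) tendsto_natCast_atTop_atTop
end
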